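/- arXiv:1208.5460 — 2 statements merged into one kernel-verified Lean document; each statement's English description precedes it below -/
import Mathlib

section
/- There exist a real number δ with 1.30 < δ < 1.31 (the Hausdorff dimension of the Apollonian gasket) and a constant c > 0 such that #{v ∈ Γ·v₀ : v ≠ v₀ and max_{1≤j≤4} |v_j| < T} / T^δ → c as T → ∞. Equivalently, the number of circles in the gasket of curvature less than T is asymptotic to c·T^δ. -/
open Filter

/-- The four generators `S₁, S₂, S₃, S₄` of the Apollonian group. -/
def Sgen : Fin 4 → Matrix (Fin 4) (Fin 4) ℤ :=
  ![!![-1, 2, 2, 2; 0, 1, 0, 0; 0, 0, 1, 0; 0, 0, 0, 1],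
    !![1, 0, 0, 0; 2, -1, 2, 2; 0, 0, 1, 0; 0, 0, 0, 1],
    !![1, 0, 0, 0; 0, 1, 0, 0; 2, 2, -1, 2; 0, 0, 0, 1],
    !![1, 0, 0, 0; 0, 1, 0, 0; 0, 0, 1, 0; 2, 2, 2, -1]]

/-- Membership in the Apollonian group `Γ = ⟨S₁, S₂, S₃, S₄⟩`. -/
def ApollonianMem (γ : Matrix (Fin 4) (Fin 4) ℤ) : Prop :=
  ∃ l : List (Fin 4), γ = (l.map Sgen).prod

/-- The root quadruple `(−10, 18, 23, 27)` of the gasket. -/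
def rootQuadruple : Fin 4 → ℤ := ![-10, 18, 23, 27]

/-- The orbit `Γ·v₀` of the root quadruple. -/
def apollonianOrbit : Set (Fin 4 → ℤ) :=
  {v | ∃ γ : Matrix (Fin 4) (Fin 4) ℤ, ApollonianMem γ ∧ γ.mulVec rootQuadruple = v}

namespace Apo

@[ext] structure Q where
  x : ℝ
  y : ℝ
  z : ℝ
  s : ℝ

def f : Fin 3 → Q → Q
  | 0, q => ⟨q.x, q.y + q.x + 2 * q.s, q.z + q.x + 2 * q.s, q.s + q.x⟩
  | 1, q => ⟨q.x + q.y + 2 * q.s, q.y, q.z + q.y + 2 * q.s, q.s + q.y⟩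
  | 2, q => ⟨q.x + q.z + 2 * q.s, q.y + q.z + 2 * q.s, q.z, q.s + q.z⟩

def Q.c (q : Q) : Fin 3 → ℝ
  | 0 => q.x
  | 1 => q.y
  | 2 => q.z

noncomputable def Q.d (q : Q) : ℝ := (q.x + q.y + q.z) / 2 + 2 * q.s

def sc (a : ℝ) (q : Q) : Q := ⟨a * q.x, a * q.y, a * q.z, a * q.s⟩

def Le (q r : Q) : Prop := q.x ≤ r.x ∧ q.y ≤ r.y ∧ q.z ≤ r.z ∧ q.s ≤ r.s

def e : Q := ⟨1, 1, 1, 1⟩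

structure K (q : Q) : Prop where
  px : 0 < q.x
  py : 0 < q.y
  pz : 0 < q.z
  ps : 0 < q.s
  hx : q.x ≤ 2 * (q.y + q.z)
  hy : q.y ≤ 2 * (q.x + q.z)
  hz : q.z ≤ 2 * (q.x + q.y)
  sxy : q.s ≤ q.x + q.y
  syz : q.s ≤ q.y + q.z
  sxz : q.s ≤ q.x + q.z

lemma K.f {q : Q} (h : K q) (i : Fin 3) : K (f i q) := by
  obtain ⟨h1, h2, h3, h4, h5, h6, h7, h8, h9, h10⟩ := h
  fin_cases i <;> constructor <;> simp only [Apo.f] <;> linarith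

lemma K.it {q : Q} (h : K q) (i : Fin 3) (n : ℕ) : K ((Apo.f i)^[n] q) := by
  induction n generalizing q with
  | zero => exact h
  | succ n ih => exact ih (h.f i)

lemma K.sc {q : Q} (h : K q) {a : ℝ} (ha : 0 < a) : K (sc a q) := by
  obtain ⟨h1, h2, h3, h4, h5, h6, h7, h8, h9, h10⟩ := h
  constructor <;> simp only [Apo.sc] <;> first | positivity | nlinarith

lemma Ke : K e := by constructor <;> norm_num [e]

lemma K.d_pos {q : Q} (h : K q) : 0 < q.d := by
  obtain ⟨h1, h2, h3, h4, h5, h6, h7, h8, h9, h10⟩ := h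
  simp only [Q.d]; linarith

lemma K.c_pos {q : Q} (h : K q) (i : Fin 3) : 0 < q.c i := by
  fin_cases i; exacts [h.px, h.py, h.pz]

lemma d_e : e.d = 7 / 2 := by norm_num [Q.d, e]

lemma d_f (i : Fin 3) (q : Q) : (f i q).d = q.d + 3 * q.c i + 2 * q.s := by
  fin_cases i <;> simp only [f, Q.d, Q.c] <;> ring

lemma d_f_lt {q : Q} (h : K q) (i : Fin 3) : q.d < (f i q).d := by
  rw [d_f]; have := h.c_pos i; have := h.ps; linarith

lemma d_f_le7 {q : Q} (h : K q) (i : Fin 3) : (f i q).d ≤ 7 * q.d := by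
  rw [d_f]
  obtain ⟨h1, h2, h3, h4, h5, h6, h7, h8, h9, h10⟩ := h
  fin_cases i <;> simp only [Q.d, Q.c] <;> linarith

lemma c_le_d {q : Q} (h : K q) (i : Fin 3) : q.c i ≤ 2 * q.d := by
  obtain ⟨h1, h2, h3, h4, h5, h6, h7, h8, h9, h10⟩ := h
  fin_cases i <;> simp only [Q.d, Q.c] <;> linarith

lemma s_le_d {q : Q} (h : K q) : q.s ≤ q.d := by
  obtain ⟨h1, h2, h3, h4, h5, h6, h7, h8, h9, h10⟩ := h
  simp only [Q.d]; linarith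

lemma d_sc (a : ℝ) (q : Q) : (sc a q).d = a * q.d := by
  simp only [sc, Q.d]; ring

lemma c_sc (a : ℝ) (q : Q) (i : Fin 3) : (sc a q).c i = a * q.c i := by
  fin_cases i <;> rfl

lemma f_sc (a : ℝ) (i : Fin 3) (q : Q) : f i (sc a q) = sc a (f i q) := by
  fin_cases i <;> ext <;> simp only [f, sc] <;> ring

lemma sc_sc (a b : ℝ) (q : Q) : sc a (sc b q) = sc (a * b) q := by
  simp only [sc, mul_assoc]

lemma sc_one (q : Q) : sc 1 q = q := by simp [sc]

lemma Le.refl (q : Q) : Le q q := ⟨le_rfl, le_rfl, le_rfl, le_rfl⟩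

lemma Le.trans {q r t : Q} (h : Le q r) (h' : Le r t) : Le q t :=
  ⟨h.1.trans h'.1, h.2.1.trans h'.2.1, h.2.2.1.trans h'.2.2.1, h.2.2.2.trans h'.2.2.2⟩

lemma Le.f {q r : Q} (h : Le q r) (i : Fin 3) : Le (f i q) (f i r) := by
  obtain ⟨h1, h2, h3, h4⟩ := h
  fin_cases i <;> refine ⟨?_, ?_, ?_, ?_⟩ <;> simp only [Apo.f] <;> linarith

lemma Le.d {q r : Q} (h : Le q r) : q.d ≤ r.d := by
  obtain ⟨h1, h2, h3, h4⟩ := h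
  simp only [Q.d]; linarith

lemma Le.sc {q r : Q} (h : Le q r) {a : ℝ} (ha : 0 ≤ a) : Le (sc a q) (sc a r) :=
  ⟨mul_le_mul_of_nonneg_left h.1 ha, mul_le_mul_of_nonneg_left h.2.1 ha,
   mul_le_mul_of_nonneg_left h.2.2.1 ha, mul_le_mul_of_nonneg_left h.2.2.2 ha⟩

lemma le_f {q : Q} (h : K q) (i : Fin 3) : Le q (f i q) := by
  obtain ⟨h1, h2, h3, h4, h5, h6, h7, h8, h9, h10⟩ := h
  fin_cases i <;> refine ⟨?_, ?_, ?_, ?_⟩ <;> simp only [f] <;> linarith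

lemma le_it {q : Q} (h : K q) (i : Fin 3) (n : ℕ) : Le q ((f i)^[n] q) := by
  induction n with
  | zero => exact Le.refl _
  | succ n ih => rw [Function.iterate_succ_apply']; exact ih.trans (le_f (h.it i n) i)

lemma le_two_d {q : Q} (h : K q) : Le q (sc (2 * q.d) e) := by
  obtain ⟨h1, h2, h3, h4, h5, h6, h7, h8, h9, h10⟩ := h
  refine ⟨?_, ?_, ?_, ?_⟩ <;> simp only [sc, e, Q.d] <;> linarith

lemma sc_le_sc {q : Q} (h : K q) {a b : ℝ} (hab : a ≤ b) : Le (sc a q) (sc b q) :=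
  ⟨mul_le_mul_of_nonneg_right hab h.px.le, mul_le_mul_of_nonneg_right hab h.py.le,
   mul_le_mul_of_nonneg_right hab h.pz.le, mul_le_mul_of_nonneg_right hab h.ps.le⟩

/-- every point of `K` dominates a multiple of `e` -/
lemma exists_mu {q : Q} (h : K q) : ∃ μ : ℝ, 0 < μ ∧ Le (sc μ e) q := by
  refine ⟨min (min q.x q.y) (min q.z q.s), ?_, ?_⟩
  · have := h.px; have := h.py; have := h.pz; have := h.ps
    simp [*]
  · refine ⟨?_, ?_, ?_, ?_⟩ <;> simp [sc, e]

lemma good {q : Q} (h : K q) {i j : Fin 3} (hij : j ≠ i) :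
    Le (sc ((f i q).d / 5) e) (f j (f i q)) := by
  obtain ⟨h1, h2, h3, h4, h5, h6, h7, h8, h9, h10⟩ := h
  fin_cases i <;> fin_cases j <;> simp at hij <;> refine ⟨?_, ?_, ?_, ?_⟩ <;>
    simp only [f, sc, e, Q.d] <;> linarith

lemma c_it (i : Fin 3) (q : Q) (n : ℕ) : ((f i)^[n] q).c i = q.c i := by
  induction n generalizing q with
  | zero => rfl
  | succ n ih =>
    rw [Function.iterate_succ_apply, ih]
    fin_cases i <;> rfl

lemma s_f (i : Fin 3) (q : Q) : (f i q).s = q.s + q.c i := by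
  fin_cases i <;> rfl

lemma s_it (i : Fin 3) (q : Q) (n : ℕ) : ((f i)^[n] q).s = q.s + n * q.c i := by
  induction n with
  | zero => simp
  | succ n ih =>
    rw [Function.iterate_succ_apply', s_f, c_it, ih]; push_cast; ring

lemma d_it (i : Fin 3) (q : Q) (n : ℕ) :
    ((f i)^[n] q).d = q.d + 2 * n * (q.c i + q.s) + n ^ 2 * q.c i := by
  induction n with
  | zero => simp
  | succ n ih =>
    rw [Function.iterate_succ_apply', d_f, c_it, s_it, ih]; push_cast; ring

lemma f0_it (q : Q) (n : ℕ) : (f 0)^[n] q =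
    ⟨q.x, q.y + 2 * n * q.s + n ^ 2 * q.x, q.z + 2 * n * q.s + n ^ 2 * q.x, q.s + n * q.x⟩ := by
  induction n with
  | zero => simp
  | succ n ih =>
    rw [Function.iterate_succ_apply', ih]
    ext <;> simp only [f] <;> push_cast <;> ring

/-! ### tree sums -/

noncomputable def S (φ : ℝ → ℝ) : ℕ → Q → ℝ
  | 0, _ => 0
  | t + 1, q => φ q.d + ∑ i, S φ t (f i q)

lemma S_zero (φ : ℝ → ℝ) (q : Q) : S φ 0 q = 0 := rfl
lemma S_succ (φ : ℝ → ℝ) (t : ℕ) (q : Q) : S φ (t + 1) q = φ q.d + ∑ i, S φ t (f i q) := rfl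

def Pos (φ : ℝ → ℝ) : Prop := ∀ u, 0 < u → 0 ≤ φ u
def Anti (φ : ℝ → ℝ) : Prop := ∀ u v, 0 < u → u ≤ v → φ v ≤ φ u

lemma S_nonneg {φ : ℝ → ℝ} (hφ : Pos φ) (t : ℕ) {q : Q} (h : K q) : 0 ≤ S φ t q := by
  induction t generalizing q with
  | zero => exact le_rfl
  | succ t ih =>
    rw [S_succ]
    exact add_nonneg (hφ _ h.d_pos) (Finset.sum_nonneg fun i _ => ih (h.f i))

lemma S_mono_succ {φ : ℝ → ℝ} (hφ : Pos φ) (t : ℕ) {q : Q} (h : K q) :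
    S φ t q ≤ S φ (t + 1) q := by
  induction t generalizing q with
  | zero => exact S_nonneg hφ 1 h
  | succ t ih =>
    rw [S_succ, S_succ]
    gcongr with i
    exact ih (h.f i)

lemma S_mono {φ : ℝ → ℝ} (hφ : Pos φ) {q : Q} (h : K q) : Monotone fun t => S φ t q :=
  monotone_nat_of_le_succ fun t => S_mono_succ hφ t h

lemma S_anti {φ : ℝ → ℝ} (hφ : Anti φ) (t : ℕ) {q r : Q} (h : K q) (hr : K r) (hqr : Le q r) :
    S φ t r ≤ S φ t q := by
  induction t generalizing q r with
  | zero => exact le_rfl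
  | succ t ih =>
    rw [S_succ, S_succ]
    exact add_le_add (hφ _ _ h.d_pos hqr.d)
      (Finset.sum_le_sum fun i _ => ih (h.f i) (hr.f i) (hqr.f i))

lemma S_le {φ ψ : ℝ → ℝ} (hφ : ∀ u, 0 < u → φ u ≤ ψ u) (t : ℕ) {q : Q} (h : K q) :
    S φ t q ≤ S ψ t q := by
  induction t generalizing q with
  | zero => exact le_rfl
  | succ t ih =>
    rw [S_succ, S_succ]
    exact add_le_add (hφ _ h.d_pos) (Finset.sum_le_sum fun i _ => ih (h.f i))

lemma S_sc (φ : ℝ → ℝ) (a : ℝ) (t : ℕ) (q : Q) :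
    S φ t (sc a q) = S (fun u => φ (a * u)) t q := by
  induction t generalizing q with
  | zero => rfl
  | succ t ih => simp only [S_succ, d_sc, f_sc, ih]

lemma S_lin (φ ψ : ℝ → ℝ) (a b : ℝ) (t : ℕ) (q : Q) :
    S (fun u => a * φ u + b * ψ u) t q = a * S φ t q + b * S ψ t q := by
  induction t generalizing q with
  | zero => simp [S]
  | succ t ih =>
    simp only [S_succ, ih, Finset.sum_add_distrib, ← Finset.mul_sum]; ring

lemma S_congr {φ ψ : ℝ → ℝ} (hφ : ∀ u, 0 < u → φ u = ψ u) (t : ℕ) {q : Q} (h : K q) :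
    S φ t q = S ψ t q :=
  le_antisymm (S_le (fun u hu => (hφ u hu).le) t h) (S_le (fun u hu => (hφ u hu).ge) t h)

def sw1 (q : Q) : Q := ⟨q.y, q.x, q.z, q.s⟩
def sw2 (q : Q) : Q := ⟨q.x, q.z, q.y, q.s⟩

lemma S_sw1 (φ : ℝ → ℝ) (t : ℕ) (q : Q) : S φ t (sw1 q) = S φ t q := by
  induction t generalizing q with
  | zero => rfl
  | succ t ih =>
    have h0 : f 0 (sw1 q) = sw1 (f 1 q) := rfl
    have h1 : f 1 (sw1 q) = sw1 (f 0 q) := rfl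
    have h2 : f 2 (sw1 q) = sw1 (f 2 q) := rfl
    have hd : (sw1 q).d = q.d := by simp only [sw1, Q.d]; ring
    simp only [S_succ, Fin.sum_univ_three, h0, h1, h2, ih, hd]; ring

lemma S_sw2 (φ : ℝ → ℝ) (t : ℕ) (q : Q) : S φ t (sw2 q) = S φ t q := by
  induction t generalizing q with
  | zero => rfl
  | succ t ih =>
    have h0 : f 0 (sw2 q) = sw2 (f 0 q) := rfl
    have h1 : f 1 (sw2 q) = sw2 (f 2 q) := rfl
    have h2 : f 2 (sw2 q) = sw2 (f 1 q) := rfl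
    have hd : (sw2 q).d = q.d := by simp only [sw2, Q.d]; ring
    simp only [S_succ, Fin.sum_univ_three, h0, h1, h2, ih, hd]; ring

/-- limit of tree sums -/
noncomputable def U (φ : ℝ → ℝ) (q : Q) : ℝ := ⨆ t, S φ t q

structure Nice (φ : ℝ → ℝ) : Prop where
  pos : Pos φ
  anti : Anti φ
  bdd : ∀ q, K q → ∃ B, ∀ t, S φ t q ≤ B

lemma Nice.bddAbove {φ : ℝ → ℝ} (hφ : Nice φ) {q : Q} (h : K q) :
    BddAbove (Set.range fun t => S φ t q) := by
  obtain ⟨B, hB⟩ := hφ.bdd q h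
  exact ⟨B, by rintro _ ⟨t, rfl⟩; exact hB t⟩

lemma Nice.tendsto {φ : ℝ → ℝ} (hφ : Nice φ) {q : Q} (h : K q) :
    Tendsto (fun t => S φ t q) atTop (nhds (U φ q)) :=
  tendsto_atTop_ciSup (S_mono hφ.pos h) (hφ.bddAbove h)

lemma Nice.le_U {φ : ℝ → ℝ} (hφ : Nice φ) {q : Q} (h : K q) (t : ℕ) : S φ t q ≤ U φ q :=
  le_ciSup (hφ.bddAbove h) t

lemma U_le {φ : ℝ → ℝ} {q : Q} {B : ℝ} (hB : ∀ t, S φ t q ≤ B) : U φ q ≤ B := ciSup_le hB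

lemma Nice.U_rec {φ : ℝ → ℝ} (hφ : Nice φ) {q : Q} (h : K q) :
    U φ q = φ q.d + ∑ i, U φ (f i q) := by
  have h1 := (hφ.tendsto h).comp (tendsto_add_atTop_nat 1)
  have h2 : Tendsto (fun t => φ q.d + ∑ i, S φ t (f i q)) atTop
      (nhds (φ q.d + ∑ i, U φ (f i q))) :=
    tendsto_const_nhds.add (tendsto_finsetSum _ fun i _ => hφ.tendsto (h.f i))
  exact tendsto_nhds_unique h1 h2

lemma Nice.U_anti {φ : ℝ → ℝ} (hφ : Nice φ) {q r : Q} (h : K q) (hr : K r) (hqr : Le q r) :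
    U φ r ≤ U φ q :=
  U_le fun t => (S_anti hφ.anti t h hr hqr).trans (hφ.le_U h t)

lemma Nice.U_nonneg {φ : ℝ → ℝ} (hφ : Nice φ) {q : Q} (h : K q) : 0 ≤ U φ q :=
  hφ.le_U h 0

/-- a function vanishing beyond `1` gives a stabilizing sum -/
lemma S_stab {φ : ℝ → ℝ} (hφ : ∀ u, 1 ≤ u → φ u = 0) {q : Q} (h : K q) {μ : ℝ} (hμ : 0 < μ)
    (hq : Le (sc μ e) q) (n : ℕ) (hn : 1 ≤ q.d + n * μ) (t : ℕ) :
    S φ (n + t) q = S φ n q := by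
  induction n generalizing q with
  | zero =>
    simp only [Nat.cast_zero, zero_mul, add_zero] at hn
    rw [S_zero, zero_add]
    clear hq
    induction t generalizing q with
    | zero => rfl
    | succ t ih =>
      rw [S_succ, hφ _ hn, zero_add]
      exact Finset.sum_eq_zero fun i _ => ih (h.f i) (hn.trans (d_f_lt h i).le)
  | succ n ih =>
    rw [show n + 1 + t = n + t + 1 by ring, S_succ, S_succ]
    congr 1
    refine Finset.sum_congr rfl fun i _ => ih (h.f i) (hq.trans (le_f h i)) ?_
    rw [d_f]
    have h1 : μ ≤ q.s := by simpa [sc, e] using hq.2.2.2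
    have := h.c_pos i
    push_cast at hn
    linarith

lemma nice_of_stab {φ : ℝ → ℝ} (hp : Pos φ) (ha : Anti φ) (hφ : ∀ u, 1 ≤ u → φ u = 0) :
    Nice φ := by
  refine ⟨hp, ha, fun q h => ?_⟩
  obtain ⟨μ, hμ, hq⟩ := exists_mu h
  obtain ⟨n, hn⟩ := exists_nat_gt (1 / μ)
  refine ⟨S φ n q, fun t => ?_⟩
  rw [div_lt_iff₀ hμ] at hn
  rw [← S_stab hφ h hμ hq n (by have := h.d_pos; linarith) t]
  exact S_mono hp h (by simp)

lemma U_sc (φ : ℝ → ℝ) (a : ℝ) (q : Q) : U φ (sc a q) = U (fun u => φ (a * u)) q := by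
  simp only [U, S_sc]

end Apo

namespace Apo

noncomputable def pw (s : ℝ) : ℝ → ℝ := fun u => u ^ (-s)

lemma pw_pos (s : ℝ) : Pos (pw s) := fun _ hu => (Real.rpow_pos_of_pos hu _).le

lemma pw_anti {s : ℝ} (hs : 0 ≤ s) : Anti (pw s) := fun _ _ hu huv =>
  Real.rpow_le_rpow_of_nonpos hu huv (by linarith)

lemma p_sc (s : ℝ) {a : ℝ} (ha : 0 < a) (t : ℕ) {q : Q} (h : K q) :
    S (pw s) t (sc a q) = a ^ (-s) * S (pw s) t q := by
  rw [S_sc]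
  have h1 : S (fun u => pw s (a * u)) t q = S (fun u => a ^ (-s) * pw s u + 0 * pw s u) t q :=
    S_congr (fun u hu => by simp only [pw]; rw [Real.mul_rpow ha.le hu.le]; ring) t h
  rw [h1, S_lin]; ring

def Bd (s : ℝ) : Prop := ∃ B, ∀ t, S (pw s) t e ≤ B

lemma p_le_e {s : ℝ} (hs : 0 ≤ s) {μ : ℝ} (hμ : 0 < μ) {q : Q} (h : K q) (hq : Le (sc μ e) q)
    (t : ℕ) : S (pw s) t q ≤ μ ^ (-s) * S (pw s) t e := by
  rw [← p_sc s hμ t Ke]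
  exact S_anti (pw_anti hs) t (Ke.sc hμ) h hq

lemma Bd.nice {s : ℝ} (hs : 0 ≤ s) (hb : Bd s) : Nice (pw s) := by
  refine ⟨pw_pos s, pw_anti hs, fun q h => ?_⟩
  obtain ⟨B, hB⟩ := hb
  obtain ⟨μ, hμ, hq⟩ := exists_mu h
  exact ⟨μ ^ (-s) * B, fun t => (p_le_e hs hμ h hq t).trans
    (mul_le_mul_of_nonneg_left (hB t) (Real.rpow_nonneg hμ.le _))⟩

lemma p_mono_s {s s' : ℝ} (hss : s ≤ s') (t : ℕ) {q : Q} (h : K q) (hd : 1 ≤ q.d) :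
    S (pw s') t q ≤ S (pw s) t q := by
  induction t generalizing q with
  | zero => exact le_rfl
  | succ t ih =>
    rw [S_succ, S_succ]
    exact add_le_add (Real.rpow_le_rpow_of_exponent_le hd (by linarith))
      (Finset.sum_le_sum fun i _ => ih (h.f i) (hd.trans (d_f_lt h i).le))

lemma Bd.mono {s s' : ℝ} (hss : s ≤ s') (hb : Bd s) : Bd s' := by
  obtain ⟨B, hB⟩ := hb
  exact ⟨B, fun t => (p_mono_s hss t Ke (by rw [d_e]; norm_num)).trans (hB t)⟩

lemma bern {s u : ℝ} (hs : 0 ≤ s) (hu : 0 < u) : 1 + s - s * u ≤ u ^ (-s) := by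
  rw [Real.rpow_def_of_pos hu]
  have h1 := Real.add_one_le_exp (Real.log u * -s)
  have h2 := mul_le_mul_of_nonneg_left (Real.log_le_sub_one_of_pos hu) hs
  linarith

/-- tangent inequality -/
lemma tangent {s a b : ℝ} (hs : 1 < s) (ha : 0 < a) (hab : a ≤ b) :
    (s - 1) * b ^ (-s) * (b - a) ≤ a ^ (1 - s) - b ^ (1 - s) := by
  have hb : 0 < b := ha.trans_le hab
  have h1 := bern (s := s - 1) (by linarith) (div_pos ha hb)
  rw [neg_sub] at h1
  have h2 : (a / b) ^ (1 - s) = a ^ (1 - s) / b ^ (1 - s) := Real.div_rpow ha.le hb.le _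
  have h3 : b ^ (1 - s) = b * b ^ (-s) := by
    rw [sub_eq_add_neg, Real.rpow_add hb, Real.rpow_one]
  have h4 : 0 < b ^ (1 - s) := Real.rpow_pos_of_pos hb _
  rw [h2, le_div_iff₀ h4] at h1
  have h5 : (1 + (s - 1) - (s - 1) * (a / b)) * b ^ (1 - s)
      = b ^ (1 - s) + (s - 1) * b ^ (-s) * (b - a) := by
    rw [h3]; field_simp; ring
  linarith

lemma delta_mono {q : Q} (h : K q) (i : Fin 3) :
    (f i q).d - q.d ≤ (f i (f i q)).d - (f i q).d := by
  have h1 : (f i q).c i = q.c i := c_it i q 1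
  rw [d_f, d_f, d_f, h1, s_f]
  have := h.c_pos i
  linarith

/-- **Lemma T** -/
lemma lemT {s : ℝ} (hs : 1 < s) (hs2 : s ≤ 2) {B : ℝ} (hB : ∀ t, S (pw s) t e ≤ B) (t : ℕ)
    {q : Q} (h : K q) (i : Fin 3) :
    S (pw s) t (f i q) * ((f i q).d - q.d) ≤ 75 / (s - 1) * B * q.d ^ (1 - s) := by
  have hs0 : 0 < s - 1 := by linarith
  have hB1 : (7 / 2 : ℝ) ^ (-s) ≤ B := by
    have := hB 1
    simpa [S, pw, d_e] using this
  have hB0 : 0 < B := (Real.rpow_pos_of_pos (by norm_num) _).trans_le hB1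
  have h5 : (5 : ℝ) ^ s ≤ 25 := by
    calc (5 : ℝ) ^ s ≤ 5 ^ (2 : ℝ) := Real.rpow_le_rpow_of_exponent_le (by norm_num) hs2
      _ = 25 := by norm_num
  have h5p : (0 : ℝ) < 5 ^ s := Real.rpow_pos_of_pos (by norm_num) _
  have h5B : 1 ≤ (5 : ℝ) ^ s * B := by
    have h6 : (5 : ℝ) ^ s * (7 / 2 : ℝ) ^ (-s) = (10 / 7) ^ s := by
      rw [Real.rpow_neg (by norm_num), ← div_eq_mul_inv, ← Real.div_rpow (by norm_num) (by norm_num)]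
      norm_num
    have h7 : (1 : ℝ) ≤ (10 / 7) ^ s := Real.one_le_rpow (by norm_num) (by linarith)
    nlinarith
  induction t generalizing q with
  | zero =>
    rw [S_zero, zero_mul]
    have := Real.rpow_nonneg h.d_pos.le (1 - s)
    positivity
  | succ t ih =>
    have hd1 := (h.f i).d_pos
    have hΔ : 0 ≤ (f i q).d - q.d := by have := d_f_lt h i; linarith
    have hside : ∀ j, j ≠ i → S (pw s) t (f j (f i q)) ≤ 5 ^ s * B * (f i q).d ^ (-s) := by
      intro j hj
      have h1 := p_le_e (s := s) (by linarith) (μ := (f i q).d / 5) (by positivity) ((h.f i).f j)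
        (good h hj) t
      rw [Real.div_rpow hd1.le (by norm_num), Real.rpow_neg (show (0:ℝ) ≤ 5 by norm_num),
        div_inv_eq_mul] at h1
      have h2 := mul_le_mul_of_nonneg_left (hB t)
        (mul_nonneg (Real.rpow_nonneg hd1.le (-s)) h5p.le)
      linarith
    have hsum : ∑ j, S (pw s) t (f j (f i q)) ≤
        S (pw s) t (f i (f i q)) + 2 * (5 ^ s * B * (f i q).d ^ (-s)) := by
      rw [Fin.sum_univ_three]
      fin_cases i
      · have := hside 1 (by decide); have := hside 2 (by decide); simp only at *; dsimp at *; linarith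
      · have := hside 0 (by decide); have := hside 2 (by decide); simp only at *; dsimp at *; linarith
      · have := hside 0 (by decide); have := hside 1 (by decide); simp only at *; dsimp at *; linarith
    have hrun : S (pw s) t (f i (f i q)) * ((f i q).d - q.d) ≤
        75 / (s - 1) * B * (f i q).d ^ (1 - s) :=
      (mul_le_mul_of_nonneg_left (delta_mono h i)
        (S_nonneg (pw_pos s) t ((h.f i).f i))).trans (ih (h.f i))
    have htan := tangent hs h.d_pos (d_f_lt h i).le
    rw [S_succ]
    have hp : 0 ≤ (f i q).d ^ (-s) := Real.rpow_nonneg hd1.le _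
    have e1 : pw s (f i q).d = (f i q).d ^ (-s) := rfl
    rw [e1]
    set X := (f i q).d ^ (-s)
    set Δ := (f i q).d - q.d
    have e2 := mul_le_mul_of_nonneg_right hsum hΔ
    have e3 := mul_le_mul_of_nonneg_left htan (show 0 ≤ 75 / (s - 1) * B by positivity)
    have e4 : 75 / (s - 1) * B * ((s - 1) * X * Δ) = 75 * B * (X * Δ) := by field_simp
    have hXΔ : 0 ≤ X * Δ := mul_nonneg hp hΔ
    have e5 : 1 + 2 * (5 ^ s * B) ≤ 75 * B := by nlinarith
    have e6 := mul_le_mul_of_nonneg_right e5 hXΔ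
    nlinarith

/-- perturbation: the critical exponent is not in the convergence set -/
lemma Bd.perturb {s : ℝ} (hs : 1 < s) (hs2 : s ≤ 2) (hb : Bd s) : ∃ s', 1 < s' ∧ s' < s ∧ Bd s' := by
  have hn := hb.nice (by linarith)
  have hs0 : 0 < s - 1 := by linarith
  set B := U (pw s) e with hBdef
  have hB : ∀ t, S (pw s) t e ≤ B := fun t => hn.le_U Ke t
  have hB0 : 0 < B := lt_of_lt_of_le (by simp [S, pw, d_e]; positivity) (hB 1)
  set C := 75 / (s - 1) * B with hC
  have hC0 : 0 < C := by positivity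
  have hT : ∀ q, K q → ∀ i, U (pw s) (f i q) * ((f i q).d - q.d) ≤ C * q.d ^ (1 - s) := by
    intro q h i
    have hΔ : 0 < (f i q).d - q.d := by have := d_f_lt h i; linarith
    rw [← le_div_iff₀ hΔ]
    exact U_le fun t => by rw [le_div_iff₀ hΔ]; exact lemT hs hs2 hB t h i
  set κ := min (1 / (6 * C)) (min 1 ((s - 1) / 2)) with hκ
  have hκ0 : 0 < κ := by simp only [hκ, lt_min_iff]; refine ⟨by positivity, by norm_num, by linarith⟩
  have hκ1 : κ ≤ 1 := (min_le_right _ _).trans (min_le_left _ _)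
  have hκ2 : κ ≤ (s - 1) / 2 := (min_le_right _ _).trans (min_le_right _ _)
  have hκ3 : κ * (6 * C) ≤ 1 := by rw [← le_div_iff₀ (by positivity)]; exact min_le_left _ _
  have hu : ∀ q, K q → ∑ i, U (pw s) (f i q) * (f i q).d ^ κ ≤
      U (pw s) q * q.d ^ κ - q.d ^ (κ - s) / 2 := by
    intro q h
    have hd := h.d_pos
    have hdκ : 0 < q.d ^ κ := Real.rpow_pos_of_pos hd _
    have h1 : ∀ i, U (pw s) (f i q) * (f i q).d ^ κ ≤
        q.d ^ κ * U (pw s) (f i q) + κ * C * q.d ^ (κ - s) := by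
      intro i
      have hd1 := (h.f i).d_pos
      have h2 : ((f i q).d / q.d) ^ κ ≤ 1 + κ * ((f i q).d / q.d - 1) := by
        have := rpow_one_add_le_one_add_mul_self (s := (f i q).d / q.d - 1)
          (by have := div_pos hd1 hd; linarith) hκ0.le hκ1
        simpa using this
      rw [Real.div_rpow hd1.le hd.le, div_le_iff₀ hdκ] at h2
      have h3 := mul_le_mul_of_nonneg_left h2 (hn.U_nonneg (h.f i))
      have h4 : q.d ^ (κ - s) = q.d ^ κ / q.d * q.d ^ (1 - s) := by
        rw [show κ - s = κ + (1 - s) - 1 by ring, Real.rpow_sub_one hd.ne', Real.rpow_add hd]; ring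
      have h5 := mul_le_mul_of_nonneg_left (hT q h i) (show 0 ≤ κ * (q.d ^ κ / q.d) by positivity)
      have h6 : U (pw s) (f i q) * ((1 + κ * ((f i q).d / q.d - 1)) * q.d ^ κ) =
          q.d ^ κ * U (pw s) (f i q) + κ * (q.d ^ κ / q.d) *
            (U (pw s) (f i q) * ((f i q).d - q.d)) := by field_simp
      rw [h4]; linarith
    have h7 := Finset.sum_le_sum (s := Finset.univ) fun i _ => h1 i
    refine h7.trans ?_
    have h8 := hn.U_rec h
    have h9 : pw s q.d = q.d ^ (-s) := rfl
    rw [h9] at h8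
    have h10 : q.d ^ κ * q.d ^ (-s) = q.d ^ (κ - s) := by
      rw [← Real.rpow_add hd]; rfl
    rw [Finset.sum_add_distrib, ← Finset.mul_sum]
    have h11 : ∑ i, U (pw s) (f i q) = U (pw s) q - q.d ^ (-s) := by linarith
    rw [h11]
    simp only [Finset.sum_const, Finset.card_univ, Fintype.card_fin, nsmul_eq_mul]
    have h12 : 0 < q.d ^ (κ - s) := Real.rpow_pos_of_pos hd _
    push_cast
    nlinarith
  refine ⟨s - κ, by linarith, by linarith, 2 * (U (pw s) e * e.d ^ κ), fun t => ?_⟩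
  suffices H : ∀ q, K q → S (pw (s - κ)) t q ≤ 2 * (U (pw s) q * q.d ^ κ) from H e Ke
  induction t with
  | zero =>
    intro q h
    have := hn.U_nonneg h
    have := Real.rpow_nonneg h.d_pos.le κ
    rw [S_zero]; positivity
  | succ t ih =>
    intro q h
    rw [S_succ]
    have h1 := Finset.sum_le_sum (s := Finset.univ) fun i _ => ih (f i q) (h.f i)
    rw [← Finset.mul_sum] at h1
    have h2 := hu q h
    have h3 : pw (s - κ) q.d = q.d ^ (κ - s) := by simp [pw]
    rw [h3]; linarith

lemma p_cont (t : ℕ) {q : Q} (h : K q) : Continuous fun s => S (pw s) t q := by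
  induction t generalizing q with
  | zero => exact continuous_const
  | succ t ih =>
    simp only [S_succ]
    refine Continuous.add ?_ (continuous_finsetSum _ fun i _ => ih (h.f i))
    exact Continuous.rpow continuous_const continuous_neg (fun _ => Or.inl h.d_pos.ne')

theorem exists_delta (N1 : Bd 1.31) (N2 : ∃ s, 1.3 < s ∧ ¬ Bd s) :
    ∃ δ : ℝ, 1.3 < δ ∧ δ < 1.31 ∧ ¬ Bd δ ∧ ∀ s, δ < s → Bd s := by
  obtain ⟨s0, hs0, hs0'⟩ := N2
  set A : Set ℝ := {s | Bd s} with hA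
  have hlb : s0 ∈ lowerBounds A := by
    intro s hs
    by_contra hlt
    exact hs0' (Bd.mono (not_le.1 hlt).le hs)
  have hne : A.Nonempty := ⟨_, N1⟩
  have hbb : BddBelow A := ⟨_, hlb⟩
  have h1 : s0 ≤ sInf A := le_csInf hne hlb
  have h2 : sInf A ≤ 1.31 := csInf_le hbb N1
  have h3 : ¬ Bd (sInf A) := by
    intro hb
    obtain ⟨s', _, h5, h6⟩ := hb.perturb (by linarith) (by linarith)
    exact absurd (csInf_le hbb h6) (not_le.2 h5)
  refine ⟨sInf A, by linarith, lt_of_le_of_ne h2 ?_, h3, ?_⟩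
  · intro heq; rw [heq] at h3; exact h3 N1
  · intro s hs
    obtain ⟨a, ha, has⟩ := exists_lt_of_csInf_lt hne hs
    exact Bd.mono has.le ha

structure Har (δ : ℝ) (h : Q → ℝ) : Prop where
  he : h e = 1
  harm : ∀ q, K q → h q = ∑ i, h (f i q)
  anti : ∀ q r, K q → K r → Le q r → h r ≤ h q
  hom : ∀ a q, 0 < a → K q → h (sc a q) = a ^ (-δ) * h q
  T : ∀ q i, K q → h (f i q) * ((f i q).d - q.d) ≤ 75 / (δ - 1) * q.d ^ (1 - δ)

theorem exists_har {δ : ℝ} (h1 : 1 < δ) (h2 : δ < 2) (hb : ¬ Bd δ) (hs : ∀ s, δ < s → Bd s) :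
    ∃ h, Har δ h := by
  set 𝒰 : Ultrafilter ℝ := Ultrafilter.of (nhdsWithin δ (Set.Ioi δ)) with h𝒰
  have hle : (𝒰 : Filter ℝ) ≤ nhdsWithin δ (Set.Ioi δ) := Ultrafilter.of_le _
  have hle' : (𝒰 : Filter ℝ) ≤ nhds δ := hle.trans nhdsWithin_le_nhds
  have hev : ∀ᶠ s in (𝒰 : Filter ℝ), δ < s ∧ s < 2 := by
    refine (Filter.Eventually.and ?_ ?_)
    · exact hle self_mem_nhdsWithin
    · exact hle' (Iio_mem_nhds h2)
  have hN : ∀ s, δ < s → Nice (pw s) := fun s h => (hs s h).nice (by linarith)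
  have hUe : ∀ s, δ < s → 0 < U (pw s) e := fun s h =>
    lt_of_lt_of_le (by simp [S, pw, d_e]; positivity) ((hN s h).le_U Ke 1)
  have hinf : Tendsto (fun s => U (pw s) e) 𝒰 atTop := by
    rw [tendsto_atTop]
    intro B
    simp only [Bd, not_exists, not_forall, not_le] at hb
    obtain ⟨t, ht⟩ := hb B
    have h3 : ∀ᶠ s in nhds δ, B < S (pw s) t e := (p_cont t Ke).continuousAt.eventually_const_lt ht
    filter_upwards [hle' h3, hev] with s hs1 hs2
    exact hs1.le.trans ((hN s hs2.1).le_U Ke t)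
  set R : ℝ → Q → ℝ := fun s q => U (pw s) q / U (pw s) e with hR
  have hlim : ∀ q, ∃ L, K q → Tendsto (fun s => R s q) 𝒰 (nhds L) := by
    intro q
    by_cases h : K q
    swap
    · exact ⟨0, fun h' => absurd h' h⟩
    obtain ⟨μ, hμ, hq⟩ := exists_mu h
    have hb : ∀ᶠ s in (𝒰 : Filter ℝ), R s q ∈ Set.Icc 0 (μ ^ (-δ) + μ ^ (-(2:ℝ))) := by
      filter_upwards [hev] with s hs2
      refine ⟨div_nonneg ((hN s hs2.1).U_nonneg h) (hUe s hs2.1).le, ?_⟩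
      rw [hR, div_le_iff₀ (hUe s hs2.1)]
      refine U_le fun t => (p_le_e (by linarith) hμ h hq t).trans ?_
      refine mul_le_mul ?_ ((hN s hs2.1).le_U Ke t) (S_nonneg (pw_pos s) t Ke) (by positivity)
      rcases le_total μ 1 with hm | hm
      · have := Real.rpow_le_rpow_of_exponent_ge hμ hm (show -(2:ℝ) ≤ -s by linarith)
        have : 0 ≤ μ ^ (-δ) := by positivity
        linarith
      · have := Real.rpow_le_rpow_of_exponent_le hm (show -s ≤ -δ by linarith)
        have : 0 ≤ μ ^ (-(2:ℝ)) := by positivity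
        linarith
    obtain ⟨L, _, hL⟩ := (isCompact_Icc (a := (0:ℝ)) (b := μ ^ (-δ) + μ ^ (-(2:ℝ)))).ultrafilter_le_nhds
      (𝒰.map fun s => R s q) (by
        rw [Ultrafilter.coe_map, le_principal_iff]; exact hb)
    exact ⟨L, fun _ => hL⟩
  choose h hh using hlim
  refine ⟨h, ?_, ?_, ?_, ?_, ?_⟩
  · refine tendsto_nhds_unique (hh e Ke) (tendsto_const_nhds.congr' ?_)
    filter_upwards [hev] with s hs2
    exact (div_self (hUe s hs2.1).ne').symm
  · intro q hq
    have h3 : Tendsto (fun s => q.d ^ (-s) / U (pw s) e + ∑ i, R s (f i q)) 𝒰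
        (nhds (0 + ∑ i, h (f i q))) := by
      refine Tendsto.add ?_ (tendsto_finsetSum _ fun i _ => hh _ (hq.f i))
      refine Tendsto.div_atTop (a := q.d ^ (-δ)) ?_ hinf
      have : Continuous fun s : ℝ => q.d ^ (-s) :=
        Continuous.rpow continuous_const continuous_neg (fun _ => Or.inl hq.d_pos.ne')
      exact (this.tendsto δ).mono_left hle'
    rw [zero_add] at h3
    refine tendsto_nhds_unique (hh q hq) (h3.congr' ?_)
    filter_upwards [hev] with s hs2
    simp only [hR]
    rw [(hN s hs2.1).U_rec hq, ← Finset.sum_div, ← add_div]; rfl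
  · intro q r hq hr hqr
    refine le_of_tendsto_of_tendsto (hh r hr) (hh q hq) ?_
    filter_upwards [hev] with s hs2
    exact div_le_div_of_nonneg_right ((hN s hs2.1).U_anti hq hr hqr) (hUe s hs2.1).le
  · intro a q ha hq
    have : Continuous fun s : ℝ => a ^ (-s) :=
        Continuous.rpow continuous_const continuous_neg (fun _ => Or.inl ha.ne')
    refine tendsto_nhds_unique (hh _ (hq.sc ha))
      ((((this.tendsto δ).mono_left hle').mul (hh q hq)).congr' ?_)
    filter_upwards [hev] with s hs2
    simp only [hR]
    rw [← mul_div_assoc]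
    congr 1
    simp only [U, p_sc s ha _ hq]
    rw [Real.mul_iSup_of_nonneg (by positivity)]
  · intro q i hq
    have c1 : Continuous fun s : ℝ => q.d ^ (1 - s) :=
        Continuous.rpow continuous_const (by fun_prop) (fun _ => Or.inl hq.d_pos.ne')
    have c2 : Tendsto (fun s : ℝ => 75 / (δ - 1) * q.d ^ (1 - s)) 𝒰
        (nhds (75 / (δ - 1) * q.d ^ (1 - δ))) :=
      ((c1.tendsto δ).mono_left hle').const_mul _
    refine le_of_tendsto_of_tendsto ((hh _ (hq.f i)).mul_const _) c2 ?_
    filter_upwards [hev] with s hs2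
    have hΔ : 0 < (f i q).d - q.d := by have := d_f_lt hq i; linarith
    have hb : ∀ t, S (pw s) t e ≤ U (pw s) e := fun t => (hN s hs2.1).le_U Ke t
    have h3 : U (pw s) (f i q) ≤ 75 / (s - 1) * U (pw s) e * q.d ^ (1 - s) / ((f i q).d - q.d) :=
      U_le fun t => by
        rw [le_div_iff₀ hΔ]; exact lemT (by linarith) hs2.2.le hb t hq i
    rw [le_div_iff₀ hΔ] at h3
    simp only [hR]
    rw [div_mul_eq_mul_div, div_le_iff₀ (hUe s hs2.1)]
    refine h3.trans ?_
    have h4 : 75 / (s - 1) ≤ 75 / (δ - 1) := by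
      apply div_le_div_of_nonneg_left <;> linarith
    have h5 : 0 ≤ U (pw s) e * q.d ^ (1 - s) :=
      mul_nonneg (hUe s hs2.1).le (Real.rpow_nonneg hq.d_pos.le _)
    nlinarith

end Apo

namespace Apo

lemma Har.lower {δ : ℝ} {h : Q → ℝ} (H : Har δ h) {q : Q} (hq : K q) :
    (2 * q.d) ^ (-δ) ≤ h q := by
  have hd : 0 < 2 * q.d := by have := hq.d_pos; linarith
  have h1 := H.anti _ _ hq (Ke.sc hd) (le_two_d hq)
  rwa [H.hom _ _ hd Ke, H.he, mul_one] at h1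

lemma Har.pos {δ : ℝ} {h : Q → ℝ} (H : Har δ h) {q : Q} (hq : K q) : 0 < h q :=
  lt_of_lt_of_le (Real.rpow_pos_of_pos (by have := hq.d_pos; linarith) _) (H.lower hq)

lemma Har.upper {δ : ℝ} {h : Q → ℝ} (H : Har δ h) {q : Q} (hq : K q) {μ : ℝ} (hμ : 0 < μ)
    (hl : Le (sc μ e) q) : h q ≤ μ ^ (-δ) := by
  have h1 := H.anti _ _ (Ke.sc hμ) hq hl
  rwa [H.hom _ _ hμ Ke, H.he, mul_one] at h1

def Sup (D : Q → ℝ) : Prop := ∀ q, K q → ∑ i, D (f i q) ≤ D q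

def es : Q := ⟨1, 1, 2, 1⟩

lemma Kes : K es := by constructor <;> norm_num [es]

lemma sup_two {D : Q → ℝ} (hD : Sup D) {q : Q} (hq : K q)
    (h0 : ∀ i, 0 ≤ D (f i q)) {i j : Fin 3} (hij : j ≠ i) : D (f i q) + D (f j q) ≤ D q := by
  have h1 := hD q hq
  rw [Fin.sum_univ_three] at h1
  have a0 := h0 0
  have a1 := h0 1
  have a2 := h0 2
  fin_cases i <;> fin_cases j <;> simp at hij <;> simp only [] <;> dsimp at * <;> linarith

lemma sup_one {D : Q → ℝ} (hD : Sup D) {q : Q} (hq : K q)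
    (h0 : ∀ i, 0 ≤ D (f i q)) (i : Fin 3) : D (f i q) ≤ D q := by
  obtain ⟨j, hj⟩ : ∃ j, j ≠ i := exists_ne i
  have := sup_two hD hq h0 hj
  have := h0 j
  linarith

lemma d_it_mono {q : Q} (hq : K q) (i : Fin 3) : Monotone fun n => ((f i)^[n] q).d := by
  refine monotone_nat_of_le_succ fun n => ?_
  rw [Function.iterate_succ_apply']
  exact (d_f_lt (hq.it i n) i).le

lemma sup_it {D : Q → ℝ} (hD : Sup D) {R : ℝ} (h0 : ∀ q, K q → q.d ≤ R → 0 ≤ D q) {q : Q}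
    (hq : K q) (i : Fin 3) (n : ℕ) (hn : 7 * ((f i)^[n] q).d ≤ R) : D ((f i)^[n] q) ≤ D q := by
  induction n with
  | zero => exact le_rfl
  | succ n ih =>
    have h1 : ((f i)^[n] q).d ≤ ((f i)^[n+1] q).d := d_it_mono hq i (Nat.le_succ n)
    have h2 := ih (by linarith)
    refine le_trans ?_ h2
    rw [Function.iterate_succ_apply']
    refine sup_one hD (hq.it i n) (fun j => h0 _ ((hq.it i n).f j) ?_) i
    have := d_f_le7 (hq.it i n) j
    linarith

/-- Step 3: from a good point we reach the standard shape. -/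
lemma step3 {δ : ℝ} (hδ2 : δ < 2) (hδ1 : 1 < δ) {h : Q → ℝ} (H : Har δ h) {η w : ℝ} (hη : 0 < η) (hη1 : η < 1)
    (hw : w = η ^ 2 / 200000000) {D : Q → ℝ} (hD : Sup D) (h0 : ∀ q, K q → q.d ≤ 100 → 0 ≤ D q)
    {β : ℝ} (hβ : 0 ≤ β)
    (hx : ∀ x, K x → Le (sc (1 - η) es) x → Le x (sc (1 + η) es) → β * h x ≤ D x)
    {q : Q} (hq : K q) (hl : Le (sc (w / 35) e) q) (hu : Le q (sc (196 * w) e)) :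
    β / 784 ≤ D q := by
  have hw0 : 0 < w := by rw [hw]; positivity
  have hw1 : w ≤ 1 / 200000000 := by rw [hw]; nlinarith
  obtain ⟨n, hn1, hn2⟩ : ∃ n : ℕ, (n : ℝ) ^ 2 * q.x ≤ 1 ∧ 1 < ((n : ℝ) + 1) ^ 2 * q.x := by
    refine ⟨Nat.sqrt ⌊1 / q.x⌋₊, ?_, ?_⟩
    · rw [← le_div_iff₀ hq.px]
      have h1 : (Nat.sqrt ⌊1 / q.x⌋₊) ^ 2 ≤ ⌊1 / q.x⌋₊ := Nat.sqrt_le' _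
      have h2 : (⌊1 / q.x⌋₊ : ℝ) ≤ 1 / q.x := Nat.floor_le (by have := hq.px; positivity)
      calc ((Nat.sqrt ⌊1 / q.x⌋₊ : ℕ) : ℝ) ^ 2 ≤ (⌊1 / q.x⌋₊ : ℝ) := by exact_mod_cast h1
        _ ≤ _ := h2
    · rw [← div_lt_iff₀ hq.px]
      have h1 : ⌊1 / q.x⌋₊ < (Nat.sqrt ⌊1 / q.x⌋₊ + 1) ^ 2 := Nat.lt_succ_sqrt' _
      have h2 : 1 / q.x < (⌊1 / q.x⌋₊ : ℝ) + 1 := Nat.lt_floor_add_one _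
      have h3 : (⌊1 / q.x⌋₊ : ℝ) + 1 ≤ ((Nat.sqrt ⌊1 / q.x⌋₊ : ℕ) + 1 : ℝ) ^ 2 := by exact_mod_cast h1
      linarith
  obtain ⟨l1, l2, l3, l4⟩ := hl
  obtain ⟨u1, u2, u3, u4⟩ := hu
  simp only [sc, e, mul_one] at l1 l2 l3 l4 u1 u2 u3 u4
  have hnn : (1 : ℝ) ≤ n := by
    rcases Nat.eq_zero_or_pos n with h | h
    · subst h; norm_num at hn2; linarith
    · exact_mod_cast h
  set N : ℝ := (n : ℝ) with hN
  have hwn : 1960 * (w * N) ≤ η := by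
    have h1 : N ^ 2 * (w / 35) ≤ 1 := le_trans (by gcongr) hn1
    have h2 : (1960 * (w * N)) ^ 2 ≤ η ^ 2 := by
      have : (1960 * (w * N)) ^ 2 = 1960 ^ 2 * 35 * w * (N ^ 2 * (w / 35)) := by ring
      rw [this]
      have h3 : (1960 : ℝ) ^ 2 * 35 * w ≤ η ^ 2 := by rw [hw]; nlinarith
      have h4 : 0 ≤ N ^ 2 * (w / 35) := by positivity
      nlinarith
    exact (sq_le_sq₀ (by positivity) hη.le).1 h2
  have hww : w ≤ w * N := by nlinarith
  have a1 : N * q.x ≤ 196 * (w * N) := by nlinarith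
  have a2 : N * q.s ≤ 196 * (w * N) := by nlinarith
  have a3 : 1 ≤ N ^ 2 * q.x + 2 * (N * q.x) + q.x := by nlinarith
  have p1 := hq.px
  have p2 := hq.py
  have p3 := hq.pz
  have p4 := hq.ps
  have n1 : 0 ≤ N * q.x := by positivity
  have n2 : 0 ≤ N * q.s := by positivity
  have hd : ((f 0)^[n] q).d ≤ 2 := by
    rw [d_it]; simp only [Q.d, Q.c]; nlinarith
  have hK := hq.it 0 n
  have hD1 := sup_it hD h0 hq 0 n (by linarith)
  have hD2 : D (f 1 ((f 0)^[n] q)) ≤ D ((f 0)^[n] q) :=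
    sup_one hD hK (fun j => h0 _ (hK.f j) (by have := d_f_le7 hK j; linarith)) 1
  have hx' := hx _ (hK.f 1) ?_ ?_
  · have h1 := H.lower (hK.f 1)
    have h2 := d_f_le7 hK 1
    have h3 : (28 : ℝ) ^ (-(2:ℝ)) ≤ (2 * (f 1 ((f 0)^[n] q)).d) ^ (-δ) := by
      calc (28 : ℝ) ^ (-(2:ℝ)) ≤ 28 ^ (-δ) :=
            Real.rpow_le_rpow_of_exponent_le (by norm_num) (by linarith)
        _ ≤ _ := Real.rpow_le_rpow_of_nonpos (by have := (hK.f 1).d_pos; linarith) (by linarith)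
            (by linarith)
    have h4 : (28 : ℝ) ^ (-(2:ℝ)) = 1 / 784 := by
      rw [Real.rpow_neg (by norm_num)]; norm_num
    rw [h4] at h3
    have := mul_le_mul_of_nonneg_left (h3.trans h1) hβ
    linarith
  · rw [f0_it]
    refine ⟨?_, ?_, ?_, ?_⟩ <;> simp only [sc, es, f] <;> linarith
  · rw [f0_it]
    refine ⟨?_, ?_, ?_, ?_⟩ <;> simp only [sc, es, f] <;> linarith

lemma run_lower {D : Q → ℝ} (hD : Sup D) {R : ℝ} (h0 : ∀ q, K q → q.d ≤ R → 0 ≤ D q) {q : Q}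
    (hq : K q) {i j : Fin 3} (hij : j ≠ i) {b : ℝ} (N : ℕ) (hN : 7 * ((f i)^[N] q).d ≤ R)
    (hb : ∀ n, 1 ≤ n → n ≤ N → b ≤ D (f j ((f i)^[n] q))) : N * b ≤ D (f i q) := by
  have key : ∀ m, m ≤ N → m * b + D ((f i)^[m+1] q) ≤ D (f i q) := by
    intro m
    induction m with
    | zero => intro _; simp
    | succ m ih =>
      intro hm
      have h1 := ih (by omega)
      have hK := hq.it i (m+1)
      have h2 : ((f i)^[m+1] q).d ≤ ((f i)^[N] q).d := d_it_mono hq i hm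
      have h3 := sup_two hD hK (fun k => h0 _ (hK.f k) (by have := d_f_le7 hK k; linarith)) hij
      have h4 := hb (m+1) (by omega) hm
      rw [← Function.iterate_succ_apply' (f i)] at h3
      push_cast
      linarith
  have h5 := key N le_rfl
  have h6 : 0 ≤ D ((f i)^[N+1] q) := by
    apply h0 _ (hq.it i _)
    rw [Function.iterate_succ_apply']
    have := d_f_le7 (hq.it i N) i
    linarith
  linarith

lemma run_upper {δ : ℝ} {h : Q → ℝ} (H : Har δ h) {q : Q}
    (hq : K q) (i : Fin 3) {a : ℝ} (N : ℕ)
    (ha : ∀ n, 1 ≤ n → n ≤ N → ∀ j, j ≠ i → h (f j ((f i)^[n] q)) ≤ a) :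
    h (f i q) ≤ N * (2 * a) + h ((f i)^[N+1] q) := by
  induction N with
  | zero => simp
  | succ m ih =>
    have h1 := ih fun n h1 h2 => ha n h1 (by omega)
    have h2 := H.harm _ (hq.it i (m+1))
    have h3 := ha (m+1) (by omega) le_rfl
    rw [Function.iterate_succ_apply' (f i) (m+1)]
    rw [Fin.sum_univ_three] at h2
    push_cast
    fin_cases i
    · have := h3 1 (by decide); have := h3 2 (by decide); dsimp at *; linarith
    · have := h3 0 (by decide); have := h3 2 (by decide); dsimp at *; linarith
    · have := h3 0 (by decide); have := h3 1 (by decide); dsimp at *; linarith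

lemma step2 {δ : ℝ} (hδ2 : δ < 2) (hδ1 : 1 < δ) {h : Q → ℝ} (H : Har δ h) {w : ℝ} (hw : 0 < w)
    (hw1 : w ≤ 1 / 2) {D : Q → ℝ} (hD : Sup D) (h0 : ∀ q, K q → q.d ≤ 100 → 0 ≤ D q)
    {β : ℝ} (hβ : 0 ≤ β)
    (hg : ∀ q, K q → Le (sc (w / 35) e) q → Le q (sc (196 * w) e) → β ≤ D q)
    {q : Q} (hq : K q) (hd1 : w / 7 ≤ q.d) (hd2 : q.d ≤ w) (i : Fin 3) :
    β / ((2 + 75 / (δ - 1)) * (w / 35) ^ (-δ)) * h (f i q) ≤ D (f i q) := by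
  have hd := hq.d_pos
  have hc := hq.c_pos i
  have hex : ∃ n : ℕ, 2 * q.d ≤ ((f i)^[n] q).d := by
    obtain ⟨n, hn⟩ := exists_nat_gt (q.d / q.s)
    rw [div_lt_iff₀ hq.ps] at hn
    refine ⟨n, ?_⟩
    rw [d_it]
    have : 0 ≤ (n : ℝ) * q.c i := by positivity
    have : 0 ≤ (n : ℝ) ^ 2 * q.c i := by positivity
    have : 0 ≤ (n : ℝ) * q.s := mul_nonneg (by positivity) hq.ps.le
    nlinarith
  classical
  obtain ⟨N, hN, hmin⟩ : ∃ N : ℕ, 2 * q.d ≤ ((f i)^[N+1] q).d ∧ ((f i)^[N] q).d < 2 * q.d := by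
    have h1 := Nat.find_spec hex
    obtain ⟨N, hN⟩ : ∃ N, Nat.find hex = N + 1 := by
      refine Nat.exists_eq_succ_of_ne_zero fun h => ?_
      rw [h] at h1
      simp at h1; linarith
    refine ⟨N, by rw [hN] at h1; exact h1, ?_⟩
    exact not_le.1 (Nat.find_min hex (m := N) (by omega))
  have h14 : ((f i)^[N+1] q).d ≤ 14 * q.d := by
    rw [Function.iterate_succ_apply']
    have := d_f_le7 (hq.it i N) i
    linarith
  obtain ⟨j0, hj0⟩ : ∃ j, j ≠ i := exists_ne i
  have hgood : ∀ n, 1 ≤ n → n ≤ N + 1 → ∀ j, j ≠ i → Le (sc (w / 35) e) (f j ((f i)^[n] q)) := by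
    intro n hn1 hn2 j hj
    obtain ⟨m, rfl⟩ : ∃ m, n = m + 1 := ⟨n - 1, by omega⟩
    rw [Function.iterate_succ_apply']
    refine Le.trans (sc_le_sc Ke ?_) (good (hq.it i m) hj)
    have : q.d ≤ ((f i)^[m] q).d := d_it_mono hq i (Nat.zero_le m)
    have := d_f_lt (hq.it i m) i
    linarith
  have hlow := run_lower hD h0 hq hj0 (b := β) (N+1) (by linarith) (by
    intro n hn1 hn2
    refine hg _ ((hq.it i n).f _) (hgood n hn1 hn2 j0 hj0) ?_
    refine (le_two_d ((hq.it i n).f _)).trans (sc_le_sc Ke ?_)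
    have h1 := d_f_le7 (hq.it i n) j0
    have h2 : ((f i)^[n] q).d ≤ ((f i)^[N+1] q).d := d_it_mono hq i hn2
    linarith)
  set a := (w / 35) ^ (-δ) with ha
  have ha0 : 0 < a := by positivity
  have hup := run_upper H hq i (a := a) (N+1) (by
    intro n hn1 hn2 j hj
    exact H.upper ((hq.it i n).f _) (by positivity) (hgood n hn1 hn2 j hj))
  have hNpos : (0 : ℝ) < ((N + 1 : ℕ) : ℝ) := by positivity
  have hlast : h ((f i)^[N+1+1] q) ≤ ((N + 1 : ℕ) : ℝ) * (75 / (δ - 1) * a) := by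
    have hK := hq.it i (N+1)
    have hT := H.T _ i hK
    rw [← Function.iterate_succ_apply' (f i)] at hT
    have hinc : q.d / ((N + 1 : ℕ) : ℝ) ≤ ((f i)^[N+1+1] q).d - ((f i)^[N+1] q).d := by
      rw [div_le_iff₀ hNpos]
      rw [d_it] at hN ⊢
      rw [d_it]
      push_cast at *
      have h1 : (0:ℝ) ≤ N := by positivity
      have h2 := hq.ps
      nlinarith [mul_nonneg h1 hc.le, mul_nonneg h1 h2.le, mul_nonneg h1 (mul_nonneg h1 hc.le)]
    have hhp : 0 < h ((f i)^[N+1+1] q) := H.pos (hq.it i _)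
    have h1 := mul_le_mul_of_nonneg_left hinc hhp.le
    have hC : 0 < 75 / (δ - 1) := by apply div_pos <;> linarith
    have h2 : ((f i)^[N+1] q).d ^ (1 - δ) ≤ q.d ^ (1 - δ) :=
      Real.rpow_le_rpow_of_nonpos hd (by linarith) (by linarith)
    have h3 : q.d ^ (1 - δ) = q.d * q.d ^ (-δ) := by
      rw [sub_eq_add_neg, Real.rpow_add hd, Real.rpow_one]
    have h4 : q.d ^ (-δ) ≤ a := Real.rpow_le_rpow_of_nonpos (by positivity) (by linarith) (by linarith)
    have h5 : h ((f i)^[N+1+1] q) * (q.d / ((N + 1 : ℕ) : ℝ)) ≤ 75 / (δ - 1) * (q.d * a) := by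
      refine (h1.trans hT).trans (mul_le_mul_of_nonneg_left ?_ hC.le)
      rw [h3] at h2
      exact h2.trans (mul_le_mul_of_nonneg_left h4 hd.le)
    have h6 : h ((f i)^[N+1+1] q) * (q.d / ((N + 1 : ℕ) : ℝ)) * (((N + 1 : ℕ) : ℝ) / q.d) =
       h ((f i)^[N+1+1] q) := by field_simp
    have h7 := mul_le_mul_of_nonneg_right h5 (show 0 ≤ (((N + 1 : ℕ) : ℝ) / q.d) by positivity)
    rw [h6] at h7
    refine h7.trans (le_of_eq ?_)
    have : δ - 1 ≠ 0 := by linarith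
    field_simp
  have hC : 0 < 75 / (δ - 1) := by apply div_pos <;> linarith
  rw [div_mul_eq_mul_div, div_le_iff₀ (by positivity)]
  have h8 : h (f i q) ≤ ((N + 1 : ℕ) : ℝ) * ((2 + 75 / (δ - 1)) * a) := by linarith
  have h9 := mul_le_mul_of_nonneg_left h8 hβ
  have h10 := mul_le_mul_of_nonneg_right hlow (show 0 ≤ (2 + 75 / (δ - 1)) * a by positivity)
  linarith

lemma step1 {h : Q → ℝ} {D : Q → ℝ} (hD : Sup D) (hh : ∀ q, K q → h q = ∑ i, h (f i q)) {ε w : ℝ}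
    (h2 : ∀ q, K q → w / 7 ≤ q.d → q.d ≤ w → ε * h q ≤ D q) {μ : ℝ} (hμ : 0 < μ) (k : ℕ) :
    ∀ q, K q → Le (sc μ e) q → q.d ≤ w → w / 7 ≤ q.d + k * μ → ε * h q ≤ D q := by
  induction k with
  | zero => intro q hq _ hd1 hd2; exact h2 q hq (by simpa using hd2) hd1
  | succ k ih =>
    intro q hq hle hd1 hd2
    rcases le_total (w / 7) q.d with hc | hc
    · exact h2 q hq hc hd1
    · refine le_trans ?_ (hD q hq)
      rw [hh q hq, Finset.mul_sum]
      refine Finset.sum_le_sum fun i _ => ih _ (hq.f i) (hle.trans (le_f hq i)) ?_ ?_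
      · have := d_f_le7 hq i; linarith
      · rw [d_f]
        have h1 : μ ≤ q.s := by simpa [sc, e] using hle.2.2.2
        have := hq.c_pos i
        push_cast at hd2
        linarith

lemma lemD1 {δ : ℝ} (hδ2 : δ < 2) (hδ1 : 1 < δ) {h : Q → ℝ} (H : Har δ h) {η : ℝ} (hη : 0 < η)
    (hη1 : η < 1) : ∃ ε w : ℝ, 0 < ε ∧ 0 < w ∧ w < 1 ∧ ∀ D, Sup D →
    (∀ q, K q → q.d ≤ 100 → 0 ≤ D q) → ∀ β, 0 ≤ β →
    (∀ x, K x → Le (sc (1 - η) es) x → Le x (sc (1 + η) es) → β * h x ≤ D x) →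
    ∀ q, K q → q.d ≤ w → ε * β * h q ≤ D q := by
  set w := η ^ 2 / 200000000 with hw
  have hw0 : 0 < w := by rw [hw]; positivity
  have hw1 : w ≤ 1 / 200000000 := by rw [hw]; nlinarith
  have hC : 0 < 75 / (δ - 1) := by apply div_pos <;> linarith
  refine ⟨1 / 784 / ((2 + 75 / (δ - 1)) * (w / 35) ^ (-δ)), w, by positivity, hw0, by linarith, ?_⟩
  intro D hD h0 β hβ hx q hq hqd
  obtain ⟨μ, hμ, hle⟩ := exists_mu hq
  obtain ⟨k, hk⟩ := exists_nat_gt (w / 7 / μ)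
  rw [div_lt_iff₀ hμ] at hk
  refine step1 hD H.harm (w := w) ?_ hμ k q hq hle hqd (by have := hq.d_pos; linarith)
  intro q hq hd1 hd2
  refine le_trans ?_ (hD q hq)
  rw [H.harm q hq, Finset.mul_sum]
  refine Finset.sum_le_sum fun i _ => ?_
  have := step2 hδ2 hδ1 H hw0 (by linarith) hD h0 (β := β / 784) (by positivity)
    (fun q hq hl hu => step3 hδ2 hδ1 H hη hη1 hw hD h0 hβ hx hq hl hu) hq hd1 hd2 i
  refine le_trans (le_of_eq ?_) this
  ring

/-- **Lemma D** -/
lemma lemD {δ : ℝ} (hδ2 : δ < 2) (hδ1 : 1 < δ) {h : Q → ℝ} (H : Har δ h) {η : ℝ} (hη : 0 < η)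
    (hη1 : η < 1) : ∃ ε ρ : ℝ, 0 < ε ∧ 0 < ρ ∧ ρ < 1 ∧ ∀ τ, 0 < τ → ∀ D, Sup D →
    (∀ q, K q → q.d ≤ 100 * τ → 0 ≤ D q) → ∀ β, 0 ≤ β →
    (∀ x, K x → Le (sc ((1 - η) * τ) es) x → Le x (sc ((1 + η) * τ) es) → β * h x ≤ D x) →
    ∀ q, K q → q.d ≤ ρ * (100 * τ) → ε * β * h q ≤ D q := by
  obtain ⟨ε, w, hε, hw, hw1, hmain⟩ := lemD1 hδ2 hδ1 H hη hη1
  refine ⟨ε, w / 100, hε, by positivity, by linarith, ?_⟩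
  intro τ hτ D hD h0 β hβ hx q hq hqd
  have hτi : 0 < τ⁻¹ := inv_pos.2 hτ
  have hτδ : 0 < τ ^ (-δ) := Real.rpow_pos_of_pos hτ _
  have hm := hmain (fun q => D (sc τ q)) ?_ ?_ (β * τ ^ (-δ)) (by positivity) ?_ (sc τ⁻¹ q)
    (hq.sc hτi) ?_
  · simp only [sc_sc, mul_inv_cancel₀ hτ.ne', sc_one] at hm
    rw [H.hom _ _ hτi hq, Real.inv_rpow hτ.le] at hm
    refine le_trans (le_of_eq ?_) hm
    field_simp
  · intro q hq
    have := hD _ (hq.sc hτ)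
    simpa only [f_sc] using this
  · intro q hq hd
    exact h0 _ (hq.sc hτ) (by rw [d_sc]; nlinarith)
  · intro x hxK hl hu
    have := hx _ (hxK.sc hτ) (by have := hl.sc hτ.le; rwa [sc_sc, mul_comm] at this)
      (by have := hu.sc hτ.le; rwa [sc_sc, mul_comm] at this)
    rw [H.hom _ _ hτ hxK] at this
    linarith
  · rw [d_sc, inv_mul_le_iff₀ hτ]; linarith

end Apo

namespace Apo

noncomputable def g (u : ℝ) : ℝ := max (1 - u) 0
noncomputable def χ (u : ℝ) : ℝ := if u < 1 then 1 else 0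

lemma nice_g : Nice g := nice_of_stab (fun _ _ => le_max_right _ _)
  (fun _ _ _ huv => max_le_max (by linarith) le_rfl)
  (fun u hu => max_eq_right (by linarith))

lemma nice_χ : Nice χ := by
  refine nice_of_stab (fun u _ => ?_) (fun u v _ huv => ?_) (fun u hu => ?_)
  · unfold χ; split_ifs <;> norm_num
  · unfold χ; split_ifs <;> first | linarith | norm_num
  · unfold χ; rw [if_neg (by linarith)]

lemma g_le_one {u : ℝ} (hu : 0 < u) : g u ≤ 1 := max_le (by linarith) (by norm_num)

lemma sup_low {δ : ℝ} {h : Q → ℝ} (H : Har δ h) (m : ℝ) : Sup fun q => U g q - m * h q := by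
  intro q hq
  have h1 := nice_g.U_rec hq
  have h2 := nice_g.pos _ hq.d_pos
  beta_reduce
  rw [H.harm q hq, Finset.sum_sub_distrib, ← Finset.mul_sum]
  linarith

lemma sup_high {δ : ℝ} {h : Q → ℝ} (H : Har δ h) (M : ℝ) :
    Sup fun q => M * h q - (U g q + 1 / 2) := by
  intro q hq
  have h1 := nice_g.U_rec hq
  have h2 := g_le_one hq.d_pos
  beta_reduce
  rw [H.harm q hq, Finset.sum_sub_distrib, ← Finset.mul_sum, Finset.sum_add_distrib]
  simp
  linarith

lemma g_zero_of_one_le (t : ℕ) {q : Q} (hq : K q) (hd : 1 ≤ q.d) : S g t q = 0 := by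
  obtain ⟨μ, hμ, hl⟩ := exists_mu hq
  have := S_stab (φ := g) (fun u hu => max_eq_right (by linarith)) hq hμ hl 0 (by simpa using hd) t
  simpa [S_zero] using this

lemma rpow14 {δ x : ℝ} (hδ2 : δ < 2) (hδ1 : 1 < δ) (hx : 0 < x) (hx14 : x ≤ 14) :
    1 / 196 ≤ x ^ (-δ) := by
  have h4 : (14 : ℝ) ^ (-(2:ℝ)) = 1 / 196 := by
    rw [Real.rpow_neg (by norm_num)]; norm_num
  rw [← h4]
  calc (14 : ℝ) ^ (-(2:ℝ)) ≤ 14 ^ (-δ) :=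
        Real.rpow_le_rpow_of_exponent_le (by norm_num) (by linarith)
    _ ≤ _ := Real.rpow_le_rpow_of_nonpos hx hx14 (by linarith)

lemma G_upper {δ : ℝ} (hδ2 : δ < 2) (hδ1 : 1 < δ) {h : Q → ℝ} (H : Har δ h) {q : Q} (hq : K q)
    (hd : q.d ≤ 7) : U g q + 1 / 2 ≤ 98 * h q := by
  suffices hS : ∀ t, S g t q ≤ 98 * h q - 1 / 2 by
    have := U_le hS
    linarith
  intro t
  have hbase : ∀ q, K q → q.d ≤ 7 → 1 / 2 ≤ 98 * h q := by
    intro q hq hd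
    have h1 := H.lower hq
    have h2 := rpow14 hδ2 hδ1 (x := 2 * q.d) (by have := hq.d_pos; linarith) (by linarith)
    linarith
  induction t generalizing q with
  | zero => have := hbase q hq hd; rw [S_zero]; linarith
  | succ t ih =>
    rcases le_or_gt 1 q.d with h1 | h1
    · rw [g_zero_of_one_le _ hq h1]; have := hbase q hq hd; linarith
    · have h2 := g_le_one hq.d_pos
      rw [S_succ]
      have h3 := Finset.sum_le_sum (s := Finset.univ) fun i _ =>
        ih (hq.f i) (by have := d_f_le7 hq i; linarith)
      rw [Finset.sum_sub_distrib, ← Finset.mul_sum, ← H.harm q hq] at h3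
      simp at h3
      linarith

/-- Lipschitz property in the scale -/
lemma G_lip {δ : ℝ} (hδ2 : δ < 2) (hδ1 : 1 < δ) {h : Q → ℝ} (H : Har δ h) {q : Q} (hq : K q)
    (hd : q.d ≤ 7) {η : ℝ} (hη : 0 < η) (hη1 : η ≤ 1 / 2) :
    U g (sc (1 - η) q) ≤ U g q + 6272 * η * h q := by
  have hp : 0 < 1 - η := by linarith
  have hp2 : 0 < (1 - η) / 2 := by linarith
  have key : ∀ u, 0 < u → g ((1 - η) * u) ≤ 1 * g u + 4 * η * g ((1 - η) / 2 * u) := by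
    intro u hu
    rcases le_or_gt 1 ((1 - η) * u) with h1 | h1
    · have e1 : g ((1 - η) * u) = 0 := max_eq_right (by linarith)
      have e2 : 0 ≤ g u := le_max_right _ _
      have e3 : 0 ≤ g ((1 - η) / 2 * u) := le_max_right _ _
      rw [e1]; positivity
    · have e1 : g ((1 - η) * u) = 1 - (1 - η) * u := max_eq_left (by linarith)
      have e2 : 1 - u ≤ g u := le_max_left _ _
      have e3 : 1 / 2 ≤ g ((1 - η) / 2 * u) := le_trans (by linarith) (le_max_left _ _)
      have e4 : u ≤ 2 := by nlinarith
      rw [e1]; nlinarith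
  have hS : ∀ t, S g t (sc (1 - η) q) ≤ U g q + 4 * η * U g (sc ((1 - η) / 2) q) := by
    intro t
    rw [S_sc]
    refine (S_le key t hq).trans ?_
    rw [S_lin, one_mul, ← S_sc]
    gcongr
    · exact nice_g.le_U hq t
    · exact nice_g.le_U (hq.sc hp2) t
  refine (U_le hS).trans ?_
  have h1 := G_upper hδ2 hδ1 H (hq.sc hp2) (by rw [d_sc]; have := hq.d_pos; nlinarith)
  rw [H.hom _ _ hp2 hq] at h1
  have h2 : ((1 - η) / 2) ^ (-δ) ≤ 16 := by
    have h4 : (1 / 4 : ℝ) ^ (-(2:ℝ)) = 16 := by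
      rw [Real.rpow_neg (by norm_num)]; norm_num
    rw [← h4]
    calc ((1 - η) / 2) ^ (-δ) ≤ (1/4) ^ (-δ) :=
          Real.rpow_le_rpow_of_nonpos (by norm_num) (by linarith) (by linarith)
      _ ≤ _ := Real.rpow_le_rpow_of_exponent_ge (by norm_num) (by norm_num) (by linarith)
  have h3 := H.pos hq
  have h5 : U g (sc ((1 - η) / 2) q) ≤ 98 * (16 * h q) := by nlinarith
  nlinarith

lemma es_d : es.d = 4 := by norm_num [es, Q.d]

lemma pow_up {δ η : ℝ} (hδ2 : δ < 2) (hδ1 : 1 < δ) (hη : 0 < η) (hη1 : η ≤ 1 / 2) :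
    (1 + η) ^ δ ≤ 1 + 3 * η := by
  calc (1 + η) ^ δ ≤ (1 + η) ^ (2 : ℝ) := Real.rpow_le_rpow_of_exponent_le (by linarith) hδ2.le
    _ = (1 + η) ^ 2 := by norm_cast
    _ ≤ _ := by nlinarith

lemma pow_dn {δ η : ℝ} (hδ2 : δ < 2) (hδ1 : 1 < δ) (hη : 0 < η) (hη1 : η ≤ 1 / 2) :
    1 - 2 * η ≤ (1 - η) ^ δ := by
  calc 1 - 2 * η ≤ (1 - η) ^ 2 := by nlinarith
    _ = (1 - η) ^ (2 : ℝ) := by norm_cast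
    _ ≤ (1 - η) ^ δ := Real.rpow_le_rpow_of_exponent_ge (by linarith) (by linarith) hδ2.le

lemma h_large {δ : ℝ} (hδ1 : 1 < δ) {h : Q → ℝ} (H : Har δ h) {ζ : ℝ} (hζ : 0 < ζ) :
    ∃ τ0, 0 < τ0 ∧ ∀ τ, 0 < τ → τ < τ0 → 1 ≤ ζ * h (sc τ es) := by
  refine ⟨min (1/8) (ζ / 8), by positivity, fun τ h0 h1 => ?_⟩
  have h2 : τ < 1 / 8 := h1.trans_le (min_le_left _ _)
  have h3 : τ < ζ / 8 := h1.trans_le (min_le_right _ _)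
  have h4 := H.lower (Kes.sc h0)
  rw [d_sc, es_d] at h4
  have h5 : (2 * (τ * 4)) ^ (-(1:ℝ)) ≤ (2 * (τ * 4)) ^ (-δ) :=
    Real.rpow_le_rpow_of_exponent_ge (by linarith) (by linarith) (by linarith)
  rw [Real.rpow_neg_one] at h5
  have h6 : 1 ≤ ζ * (2 * (τ * 4))⁻¹ := by
    rw [← div_eq_mul_inv, le_div_iff₀ (by linarith)]; linarith
  nlinarith

lemma cont {δ : ℝ} (hδ2 : δ < 2) (hδ1 : 1 < δ) {h : Q → ℝ} (H : Har δ h) {η' : ℝ} (hη' : 0 < η') :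
    ∃ η τ0 : ℝ, 0 < η ∧ η ≤ 1 / 2 ∧ 0 < τ0 ∧ ∀ τ, 0 < τ → τ < τ0 → ∃ gs : ℝ, ∀ x, K x →
      Le (sc ((1 - η) * τ) es) x → Le x (sc ((1 + η) * τ) es) →
      U g x + 1 / 2 ≤ (gs + η') * h x ∧ (gs - η') * h x ≤ U g x := by
  set η := min (1 / 2) (η' / 100000) with hη
  have hη0 : 0 < η := by positivity
  have hη1 : η ≤ 1 / 2 := min_le_left _ _
  have hη2 : η ≤ η' / 100000 := min_le_right _ _
  obtain ⟨τ1, hτ1, hlarge⟩ := h_large hδ1 H (ζ := min 1 (η' / 10)) (by positivity)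
  refine ⟨η, min τ1 1, hη0, hη1, by positivity, fun τ hτ hτ0 => ?_⟩
  have hτa : τ < τ1 := hτ0.trans_le (min_le_left _ _)
  have hτb : τ < 1 := hτ0.trans_le (min_le_right _ _)
  have hxs := Kes.sc hτ
  have hxd : (sc τ es).d ≤ 7 := by rw [d_sc, es_d]; linarith
  have hsp := H.pos hxs
  have hsl := hlarge τ hτ hτa
  set hs := h (sc τ es) with hhs
  have hb := G_upper hδ2 hδ1 H hxs hxd
  have hnn := nice_g.U_nonneg hxs
  have hlip := G_lip hδ2 hδ1 H hxs hxd hη0 hη1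
  rw [sc_sc] at hlip
  have hlip2 : U g (sc τ es) ≤ U g (sc ((1 + η) * τ) es) + 6272 * η * hs := by
    have hK2 : K (sc ((1 + η) * τ) es) := Kes.sc (by positivity)
    have h1 := G_lip hδ2 hδ1 H hK2 (by rw [d_sc, es_d]; nlinarith) (η := η / (1 + η)) (by positivity)
      (by rw [div_le_iff₀ (by linarith)]; linarith)
    rw [sc_sc, show (1 - η / (1 + η)) * ((1 + η) * τ) = τ by field_simp; ring] at h1
    have h2 : h (sc ((1 + η) * τ) es) ≤ hs := by
      apply H.anti _ _ hxs hK2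
      exact sc_le_sc Kes (by nlinarith)
    have h3 : η / (1 + η) ≤ η := by rw [div_le_iff₀ (by linarith)]; nlinarith
    have h4 := H.pos hK2
    have h5 : η / (1 + η) * h (sc ((1 + η) * τ) es) ≤ η * hs :=
      mul_le_mul h3 h2 h4.le hη0.le
    linarith
  refine ⟨U g (sc τ es) / hs, fun x hx hl hu => ?_⟩
  set gs := U g (sc τ es) / hs with hgs
  have hgs0 : 0 ≤ gs := div_nonneg hnn hsp.le
  have hgsm : gs * hs = U g (sc τ es) := by rw [hgs]; field_simp
  have hgs1 : gs ≤ 98 := by rw [hgs, div_le_iff₀ hsp]; linarith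
  have hKm : K (sc ((1 - η) * τ) es) := Kes.sc (mul_pos (by linarith) hτ)
  have hKp : K (sc ((1 + η) * τ) es) := Kes.sc (by positivity)
  have g1 := nice_g.U_anti hKm hx hl
  have g2 := nice_g.U_anti hx hKp hu
  have k1 := H.anti _ _ hKm hx hl
  have k2 := H.anti _ _ hx hKp hu
  have hxp := H.pos hx
  have k3 : hs ≤ (1 + 3 * η) * h x := by
    rw [← sc_sc, H.hom _ _ (by linarith) hxs, Real.rpow_neg (by linarith)] at k2
    have hq := Real.rpow_pos_of_pos (show 0 < 1 + η by linarith) δ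
    rw [inv_mul_le_iff₀ hq] at k2
    refine k2.trans ?_
    have := pow_up hδ2 hδ1 hη0 hη1
    nlinarith
  have k4 : (1 - 2 * η) * h x ≤ hs := by
    rw [← sc_sc, H.hom _ _ (by linarith) hxs, Real.rpow_neg (by linarith)] at k1
    have hq := Real.rpow_pos_of_pos (show 0 < 1 - η by linarith) δ
    rw [le_inv_mul_iff₀ hq] at k1
    refine le_trans ?_ k1
    have := pow_dn hδ2 hδ1 hη0 hη1
    nlinarith
  have k5 : 1 ≤ η' / 10 * hs := hsl.trans (by gcongr; exact min_le_right _ _)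
  have k6 : hs ≤ 5 / 2 * h x := k3.trans (by nlinarith)
  have m1 : gs * hs ≤ gs * ((1 + 3 * η) * h x) := mul_le_mul_of_nonneg_left k3 hgs0
  have m2 : gs * ((1 - 2 * η) * h x) ≤ gs * hs := mul_le_mul_of_nonneg_left k4 hgs0
  have m3 : η * hs ≤ η * (5 / 2 * h x) := mul_le_mul_of_nonneg_left k6 hη0.le
  have m4 : η * h x ≤ η' / 100000 * h x := mul_le_mul_of_nonneg_right hη2 hxp.le
  have m5 : gs * (η * h x) ≤ 98 * (η * h x) := mul_le_mul_of_nonneg_right hgs1 (by positivity)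
  have m6 : η' / 10 * hs ≤ η' / 10 * (5 / 2 * h x) := mul_le_mul_of_nonneg_left k6 (by positivity)
  have m7 : 0 ≤ η' * h x := by positivity
  constructor <;> linarith

def Br (h : Q → ℝ) (m M r : ℝ) : Prop :=
  ∀ q, K q → q.d ≤ r → m * h q ≤ U g q ∧ U g q + 1 / 2 ≤ M * h q

lemma iter {δ : ℝ} (hδ2 : δ < 2) (hδ1 : 1 < δ) {h : Q → ℝ} (H : Har δ h) {η' : ℝ} (hη' : 0 < η') :
    ∃ ε ρ r0 : ℝ, 0 < ε ∧ ε ≤ 1 / 2 ∧ 0 < ρ ∧ ρ < 1 ∧ 0 < r0 ∧ ∀ m M r, 0 < r → r < r0 →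
      Br h m M r → ∃ m' M', m ≤ m' ∧ M' ≤ M ∧ Br h m' M' (ρ * r) ∧
        M' - m' ≤ (1 - ε) * (M - m) + 2 * ε * η' := by
  obtain ⟨η, τ0, hη0, hη1, hτ0, hc⟩ := cont hδ2 hδ1 H hη'
  obtain ⟨ε1, ρ, hε1, hρ, hρ1, hD⟩ := lemD hδ2 hδ1 H hη0 (by linarith)
  set ε := min ε1 (1/2) with hε
  have hε0 : 0 < ε := by positivity
  refine ⟨ε, ρ, 100 * τ0, hε0, min_le_right _ _, hρ, hρ1, by positivity, ?_⟩
  intro m M r hr hr0 hB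
  set τ := r / 100 with hτ
  have hrτ : r = 100 * τ := by rw [hτ]; ring
  have hτp : 0 < τ := by positivity
  obtain ⟨gs, hgs⟩ := hc τ hτp (by linarith)
  have hdx : ∀ x, K x → Le x (sc ((1 + η) * τ) es) → x.d ≤ r := by
    intro x _ hu
    have := hu.d
    rw [d_sc, es_d] at this
    nlinarith
  refine ⟨m + ε * max (gs - η' - m) 0, M - ε * max (M - gs - η') 0, ?_, ?_, ?_, ?_⟩
  · have : 0 ≤ ε * max (gs - η' - m) 0 := by positivity
    linarith
  · have : 0 ≤ ε * max (M - gs - η') 0 := by positivity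
    linarith
  · intro q hq hqd
    have hqp := H.pos hq
    have d1 := hD τ hτp _ (sup_low H m)
      (fun q hq hd => by have := (hB q hq (by linarith)).1; linarith)
      (max (gs - η' - m) 0) (le_max_right _ _) (fun x hx hl hu => by
        have h1 := (hB x hx (hdx x hx hu)).1
        have h2 := (hgs x hx hl hu).2
        rw [max_mul_of_nonneg _ _ (H.pos hx).le]
        refine max_le ?_ ?_ <;> linarith) q hq (by rwa [hrτ] at hqd)
    have d2 := hD τ hτp _ (sup_high H M)
      (fun q hq hd => by have := (hB q hq (by linarith)).2; linarith)
      (max (M - gs - η') 0) (le_max_right _ _) (fun x hx hl hu => by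
        have h1 := (hB x hx (hdx x hx hu)).2
        have h2 := (hgs x hx hl hu).1
        rw [max_mul_of_nonneg _ _ (H.pos hx).le]
        refine max_le ?_ ?_ <;> linarith) q hq (by rwa [hrτ] at hqd)
    have e1 : ε * (max (gs - η' - m) 0 * h q) ≤ ε1 * (max (gs - η' - m) 0 * h q) :=
      mul_le_mul_of_nonneg_right (min_le_left _ _) (by positivity)
    have e2 : ε * (max (M - gs - η') 0 * h q) ≤ ε1 * (max (M - gs - η') 0 * h q) :=
      mul_le_mul_of_nonneg_right (min_le_left _ _) (by positivity)
    constructor <;> linarith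
  · have e1 := mul_le_mul_of_nonneg_left (le_max_left (gs - η' - m) 0) hε0.le
    have e2 := mul_le_mul_of_nonneg_left (le_max_left (M - gs - η') 0) hε0.le
    linarith

lemma Br.mono {h : Q → ℝ} {m M r r' : ℝ} (hB : Br h m M r) (hr : r' ≤ r) : Br h m M r' :=
  fun q hq hd => hB q hq (hd.trans hr)

lemma bracket {δ : ℝ} (hδ2 : δ < 2) (hδ1 : 1 < δ) {h : Q → ℝ} (H : Har δ h) {η' : ℝ}
    (hη' : 0 < η') : ∃ m M r, 0 < r ∧ Br h m M r ∧ M - m ≤ 3 * η' := by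
  obtain ⟨ε, ρ, r0, hε, hε1, hρ, hρ1, hr0, hit⟩ := iter hδ2 hδ1 H hη'
  have hk : ∀ k : ℕ, ∃ m M r, 0 < r ∧ r < r0 ∧ Br h m M r ∧
      M - m - 2 * η' ≤ (1 - ε) ^ k * 98 := by
    intro k
    induction k with
    | zero =>
      refine ⟨0, 98, min 7 (r0 / 2), by positivity,
        (min_le_right _ _).trans_lt (by linarith), ?_, by norm_num; linarith⟩
      intro q hq hd
      refine ⟨by rw [zero_mul]; exact nice_g.U_nonneg hq, G_upper hδ2 hδ1 H hq (hd.trans (min_le_left _ _))⟩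
    | succ k ih =>
      obtain ⟨m, M, r, h1, h2, h3, h4⟩ := ih
      obtain ⟨m', M', _, _, h7, h8⟩ := hit m M r h1 h2 h3
      refine ⟨m', M', ρ * r, by positivity, by nlinarith, h7, ?_⟩
      have h9 := mul_le_mul_of_nonneg_left h4 (show 0 ≤ 1 - ε by linarith)
      rw [pow_succ]
      linarith
  obtain ⟨k, hk2⟩ := exists_pow_lt_of_lt_one (show 0 < η' / 98 by positivity)
    (show 1 - ε < 1 by linarith)
  obtain ⟨m, M, r, h1, _, h3, h4⟩ := hk k
  exact ⟨m, M, r, h1, h3, by linarith⟩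

lemma G_lower {δ : ℝ} (hδ2 : δ < 2) (hδ1 : 1 < δ) {h : Q → ℝ} (H : Har δ h) :
    ∃ m r, 0 < m ∧ 0 < r ∧ ∀ q, K q → q.d ≤ r → m * h q ≤ U g q := by
  obtain ⟨ε, ρ, hε, hρ, hρ1, hD⟩ := lemD hδ2 hδ1 H (η := 1/2) (by norm_num) (by norm_num)
  have hsup : Sup fun q => U g q := by
    have := sup_low H 0
    simpa using this
  have hxK : K (sc ((1 - 1/2) * (1/16)) es) := Kes.sc (by norm_num)
  have hx := H.pos hxK
  set hs := h (sc ((1 - 1/2) * (1/16)) es) with hhs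
  refine ⟨ε * (1 / 2 / hs), ρ * (100 * (1/16)), by positivity, by positivity, ?_⟩
  refine hD (1/16) (by norm_num) _ hsup (fun q hq _ => nice_g.U_nonneg hq) _ (by positivity) ?_
  intro x hx' hl hu
  have h1 := H.anti _ _ hxK hx' hl
  have h2 : 1 / 2 ≤ U g x := by
    have hd := hu.d
    rw [d_sc, es_d] at hd
    refine le_trans ?_ (nice_g.le_U hx' 1)
    simp only [S, g, Finset.sum_const_zero, add_zero]
    exact le_trans (by linarith) (le_max_left _ _)
  refine le_trans ?_ h2
  rw [div_mul_eq_mul_div, div_le_iff₀ hx]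
  rw [← hhs] at h1
  linarith

lemma G_limit {δ : ℝ} (hδ2 : δ < 2) (hδ1 : 1 < δ) {h : Q → ℝ} (H : Har δ h) :
    ∃ L : ℝ, 0 < L ∧ ∀ ζ, 0 < ζ → ∃ r, 0 < r ∧ ∀ q, K q → q.d ≤ r →
      (L - ζ) * h q ≤ U g q ∧ U g q ≤ (L + ζ) * h q := by
  have hex : ∀ r, 0 < r → ∃ q, K q ∧ q.d ≤ r := fun r hr =>
    ⟨sc (r / 4) es, Kes.sc (by positivity), by rw [d_sc, es_d]; linarith⟩
  set A : Set ℝ := {m | ∃ r, 0 < r ∧ ∀ q, K q → q.d ≤ r → m * h q ≤ U g q} with hA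
  have hup : ∀ m ∈ A, ∀ M r', 0 < r' → (∀ q, K q → q.d ≤ r' → U g q ≤ M * h q) → m ≤ M := by
    rintro m ⟨r, hr, hm⟩ M r' hr' hM
    obtain ⟨q, hq, hqd⟩ := hex (min r r') (by positivity)
    have h1 := hm q hq (hqd.trans (min_le_left _ _))
    have h2 := hM q hq (hqd.trans (min_le_right _ _))
    exact le_of_mul_le_mul_right (h1.trans h2) (H.pos hq)
  have hbdd : BddAbove A := ⟨98, fun m hm => hup m hm 98 7 (by norm_num) fun q hq hd => by
    have := G_upper hδ2 hδ1 H hq hd; linarith⟩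
  obtain ⟨m0, r0, hm0, hr0, hlow⟩ := G_lower hδ2 hδ1 H
  have hm0A : m0 ∈ A := ⟨r0, hr0, hlow⟩
  refine ⟨sSup A, lt_of_lt_of_le hm0 (le_csSup hbdd hm0A), fun ζ hζ => ?_⟩
  obtain ⟨m, M, r, hr, hB, hMm⟩ := bracket hδ2 hδ1 H (η' := ζ / 3) (by positivity)
  have hmA : m ∈ A := ⟨r, hr, fun q hq hd => (hB q hq hd).1⟩
  have h1 : m ≤ sSup A := le_csSup hbdd hmA
  have h2 : sSup A ≤ M := csSup_le ⟨m, hmA⟩ fun m' hm' => hup m' hm' M r hr fun q hq hd => by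
    have := (hB q hq hd).2; linarith
  refine ⟨r, hr, fun q hq hd => ?_⟩
  obtain ⟨h3, h4⟩ := hB q hq hd
  have h5 := H.pos hq
  constructor
  · refine le_trans ?_ h3
    gcongr; linarith
  · have : M * h q ≤ (sSup A + ζ) * h q := by gcongr; linarith
    linarith

lemma taub1 {lam : ℝ} (hl : 1 < lam) {q : Q} (hq : K q) :
    (lam - 1) * U χ q + U g q ≤ lam * U g (sc lam⁻¹ q) := by
  have hli : 0 < lam⁻¹ := by positivity
  refine le_of_tendsto_of_tendsto' (((nice_χ.tendsto hq).const_mul (lam - 1)).add (nice_g.tendsto hq))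
    ((nice_g.tendsto (hq.sc hli)).const_mul lam) fun t => ?_
  have key : ∀ u, 0 < u → (lam - 1) * χ u + 1 * g u ≤ lam * g (lam⁻¹ * u) + 0 * g u := by
    intro u hu
    have e1 : lam * g (lam⁻¹ * u) = max (lam - u) 0 := by
      unfold g
      rw [mul_max_of_nonneg _ _ (by linarith : (0:ℝ) ≤ lam), mul_zero, mul_sub, mul_one,
        mul_inv_cancel_left₀ (by linarith)]
    rw [e1]
    unfold χ g
    have := le_max_left (lam - u) 0
    have := le_max_right (lam - u) 0
    split_ifs with h1
    · rw [max_eq_left (a := 1 - u) (by linarith)]; linarith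
    · rw [max_eq_right (a := 1 - u) (by linarith)]; linarith
  have h1 := S_le key t hq
  rw [S_lin, S_lin, ← S_sc] at h1
  linarith

lemma taub2 {lam : ℝ} (hl : 1 < lam) {q : Q} (hq : K q) :
    lam * U g q ≤ (lam - 1) * U χ q + U g (sc lam q) := by
  have hli : 0 < lam := by linarith
  refine le_of_tendsto_of_tendsto' ((nice_g.tendsto hq).const_mul lam)
    (((nice_χ.tendsto hq).const_mul (lam - 1)).add (nice_g.tendsto (hq.sc hli))) fun t => ?_
  have key : ∀ u, 0 < u → lam * g u + 0 * g u ≤ (lam - 1) * χ u + 1 * g (lam * u) := by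
    intro u hu
    unfold χ g
    have := le_max_left (1 - lam * u) 0
    have := le_max_right (1 - lam * u) 0
    split_ifs with h1
    · rw [max_eq_left (a := 1 - u) (by linarith)]; nlinarith
    · rw [max_eq_right (a := 1 - u) (by linarith)]; linarith
  have h1 := S_le key t hq
  rw [S_lin, S_lin, ← S_sc] at h1
  linarith

lemma F_limit {δ : ℝ} (hδ2 : δ < 2) (hδ1 : 1 < δ) {h : Q → ℝ} (H : Har δ h) :
    ∃ L : ℝ, 0 < L ∧ ∀ ζ, 0 < ζ → ∃ r, 0 < r ∧ ∀ q, K q → q.d ≤ r →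
      (L - ζ) * h q ≤ U χ q ∧ U χ q ≤ (L + ζ) * h q := by
  obtain ⟨L, hL, hlim⟩ := G_limit hδ2 hδ1 H
  refine ⟨(1 + δ) * L, by positivity, fun ζ hζ => ?_⟩
  -- difference quotient
  have hder : HasDerivAt (fun x : ℝ => x ^ (1 + δ)) (1 + δ) 1 := by
    have := Real.hasDerivAt_rpow_const (x := 1) (p := 1 + δ) (Or.inl one_ne_zero)
    simpa using this
  have hslope : Tendsto (fun x : ℝ => (x ^ (1 + δ) - 1) / (x - 1)) (nhdsWithin 1 (Set.Ioi 1))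
      (nhds (1 + δ)) := by
    have h1 := (hasDerivAt_iff_tendsto_slope.1 hder).mono_left
      (nhdsWithin_mono 1 (fun x (hx : 1 < x) => hx.ne' : Set.Ioi (1:ℝ) ⊆ {1}ᶜ))
    refine h1.congr fun x => ?_
    rw [slope_def_field]; simp
  have hpow : Tendsto (fun x : ℝ => x ^ (-δ)) (nhdsWithin 1 (Set.Ioi 1)) (nhds 1) := by
    have : ContinuousAt (fun x : ℝ => x ^ (-δ)) 1 :=
      Real.continuousAt_rpow_const _ _ (Or.inl one_ne_zero)
    have h2 := this.tendsto.mono_left (nhdsWithin_le_nhds (s := Set.Ioi 1))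
    simpa using h2
  have hA : Tendsto (fun x : ℝ => L * ((x ^ (1 + δ) - 1) / (x - 1))) (nhdsWithin 1 (Set.Ioi 1))
      (nhds (L * (1 + δ))) := hslope.const_mul L
  have hBt : Tendsto (fun x : ℝ => L * (x ^ (-δ) * ((x ^ (1 + δ) - 1) / (x - 1))))
      (nhdsWithin 1 (Set.Ioi 1)) (nhds (L * (1 * (1 + δ)))) := (hpow.mul hslope).const_mul L
  have ev1 := hA.eventually_lt_const (show L * (1 + δ) < L * (1 + δ) + ζ / 2 by linarith)
  have ev2 := hBt.eventually_const_lt (show L * (1 * (1 + δ)) - ζ / 2 < L * (1 * (1 + δ)) by linarith)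
  have ev3 : ∀ᶠ x : ℝ in nhdsWithin 1 (Set.Ioi 1), 1 < x := self_mem_nhdsWithin
  obtain ⟨l, ⟨hl1, hl2⟩, hl⟩ := ((ev1.and ev2).and ev3).exists
  have hlp : 0 < l := by linarith
  have hl0 : 0 < l - 1 := by linarith
  have hP : 0 < l ^ (1 + δ) := Real.rpow_pos_of_pos hlp _
  have hPe : l ^ (1 + δ) = l * l ^ δ := by rw [Real.rpow_add hlp, Real.rpow_one]
  have hPn : l ^ (-δ) * l ^ (1 + δ) = l := by
    rw [← Real.rpow_add hlp]; simp
  have hN : 0 < l ^ (-δ) := Real.rpow_pos_of_pos hlp _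
  have hN1 : l ^ (-δ) ≤ 1 := Real.rpow_le_one_of_one_le_of_nonpos hl.le (by linarith)
  set z := ζ / 2 * (l - 1) / (l ^ (1 + δ) + 1 + l) with hz
  have hz0 : 0 < z := by positivity
  have hzm : z * (l ^ (1 + δ) + 1 + l) = ζ / 2 * (l - 1) := by rw [hz]; field_simp
  obtain ⟨r, hr, hrq⟩ := hlim z hz0
  rw [← mul_div_assoc, div_lt_iff₀ hl0] at hl1
  rw [← mul_div_assoc, ← mul_div_assoc, lt_div_iff₀ hl0] at hl2
  rw [mul_sub (l ^ (-δ)), hPn] at hl2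
  refine ⟨r / l, by positivity, fun q hq hd => ?_⟩
  have hd' : l * q.d ≤ r := by rw [le_div_iff₀ hlp] at hd; linarith
  have hqp := H.pos hq
  have hqd := hq.d_pos
  obtain ⟨a1, a2⟩ := hrq q hq (by nlinarith)
  obtain ⟨b1, b2⟩ := hrq (sc l q) (hq.sc hlp) (by rw [d_sc]; exact hd')
  obtain ⟨c1, c2⟩ := hrq (sc l⁻¹ q) (hq.sc (by positivity)) (by
    rw [d_sc, inv_mul_le_iff₀ hlp]; nlinarith)
  rw [H.hom _ _ hlp hq] at b1 b2
  rw [H.hom _ _ (by positivity) hq, Real.rpow_neg (by positivity), Real.inv_rpow hlp.le, inv_inv] at c1 c2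
  have t1 := taub1 hl hq
  have t2 := taub2 hl hq
  have hz1 : z * h q * (l ^ (1 + δ) + 1 + l) = ζ / 2 * (l - 1) * h q := by rw [← hzm]; ring
  have hl1' := mul_le_mul_of_nonneg_right hl1.le hqp.le
  have hl2' := mul_le_mul_of_nonneg_right hl2.le hqp.le
  have c2' := mul_le_mul_of_nonneg_left c2 hlp.le
  have c3 : l * ((L + z) * (l ^ δ * h q)) = (L + z) * l ^ (1 + δ) * h q := by rw [hPe]; ring
  have hzp : 0 < z * h q := by positivity
  have zz1 : 0 < z * h q * l ^ (1 + δ) := by positivity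
  have zz2 : 0 < z * h q * l := by positivity
  have zz3 : z * h q * l ^ (-δ) ≤ z * h q * 1 := mul_le_mul_of_nonneg_left hN1 hzp.le
  have a1' := mul_le_mul_of_nonneg_left a1 hlp.le
  constructor
  · refine le_of_mul_le_mul_left ?_ hl0
    linarith
  · refine le_of_mul_le_mul_left ?_ hl0
    linarith

theorem F_asymp {δ : ℝ} (hδ2 : δ < 2) (hδ1 : 1 < δ) {h : Q → ℝ} (H : Har δ h) :
    ∃ L : ℝ, 0 < L ∧ ∀ q, K q →
      Tendsto (fun T : ℝ => U χ (sc T⁻¹ q) / T ^ δ) atTop (nhds (L * h q)) := by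
  obtain ⟨L, hL, hlim⟩ := F_limit hδ2 hδ1 H
  refine ⟨L, hL, fun q hq => ?_⟩
  have hqp := H.pos hq
  rw [Metric.tendsto_atTop]
  intro ε hε
  obtain ⟨r, hr, hrq⟩ := hlim (ε / 2 / h q) (by positivity)
  refine ⟨q.d / r + 1, fun T hT => ?_⟩
  have hdr : 0 < q.d / r := div_pos hq.d_pos hr
  have hTp : 0 < T := by linarith
  have hTδ : 0 < T ^ δ := Real.rpow_pos_of_pos hTp _
  obtain ⟨h1, h2⟩ := hrq (sc T⁻¹ q) (hq.sc (by positivity)) (by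
    rw [d_sc, inv_mul_le_iff₀ hTp]
    have : q.d / r ≤ T := by linarith
    rwa [div_le_iff₀ hr] at this)
  rw [H.hom _ _ (by positivity) hq, Real.rpow_neg (by positivity), Real.inv_rpow hTp.le, inv_inv] at h1 h2
  have h3 : L * h q - ε / 2 ≤ U χ (sc T⁻¹ q) / T ^ δ := by
    rw [le_div_iff₀ hTδ]
    refine le_trans (le_of_eq ?_) h1
    field_simp
  have h4 : U χ (sc T⁻¹ q) / T ^ δ ≤ L * h q + ε / 2 := by
    rw [div_le_iff₀ hTδ]
    refine le_trans h2 (le_of_eq ?_)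
    field_simp
  rw [Real.dist_eq, abs_lt]
  constructor <;> linarith

end Apo

namespace Apo

/-! ### integer data for the numerical bounds -/

structure V where
  a : ℕ
  b : ℕ
  c : ℕ
  s : ℕ

def V.dot (y v : V) : ℕ := y.a * v.a + y.b * v.b + y.c * v.c + y.s * v.s
def V.be (v : V) : ℕ := v.a + v.b + v.c + 2 * v.s
def V.al (v : V) (n : ℕ) : ℕ := v.a + 2 * n * (v.s + v.a + v.c) + n ^ 2 * (v.be + v.c)
def V.si (v : V) (n : ℕ) : ℕ := v.s + v.a + v.c + n * (v.be + v.c)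
def V.ch1 (v : V) (n : ℕ) : V := ⟨v.be, v.al n, v.c, v.si n⟩
def V.ch2 (v : V) (n : ℕ) : V := ⟨v.c, v.al n, v.be, v.si n⟩

def tU (X Y c : ℕ) : Bool := Nat.ble (100000 ^ 100 * Y ^ 131) (c ^ 100 * X ^ 131)

def yU : V := ⟨2103, 1000, 2945, 2956⟩

def cU (v : V) : ℕ → List (ℕ × ℕ) → Bool
  | _, [] => true
  | n, p :: l => tU (yU.dot (v.ch1 n)) (yU.dot v) p.1 &&
      (tU (yU.dot (v.ch2 n)) (yU.dot v) p.2 && cU v (n + 1) l)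

def sumL : List (ℕ × ℕ) → ℕ
  | [] => 0
  | p :: l => (p.1 + p.2) + sumL l

def okU (v : V) (l : List (ℕ × ℕ)) (c : ℕ) : Bool :=
  cU v 0 l && (tU (1000 * (v.be + v.c) * 39 ^ 2) (yU.dot v) c &&
    (Nat.beq l.length 40 && Nat.ble (162 * sumL l + 200 * 39 * c) (999 * 162 * 100)))

lemma okU_0 : okU ⟨1, 0, 0, 0⟩ [
    (25002, 21084), (10198, 9332), (5241, 4965), (3086, 2976), (1987, 1936), (1363, 1337),
    (981, 966), (732, 723), (563, 558), (444, 440), (356, 354), (291, 290), (242, 240),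
    (203, 202), (172, 172), (148, 147), (128, 127), (111, 111), (98, 97), (86, 86), (77, 76),
    (68, 68), (61, 61), (55, 55), (50, 50), (45, 45), (41, 41), (38, 38), (35, 35), (32, 32),
    (30, 29), (27, 27), (25, 25), (24, 23), (22, 22), (20, 20), (19, 19), (18, 18), (17, 17),
    (16, 16)] 18 = true := by decide +kernel

lemma okU_1 : okU ⟨1, 1, 0, 1⟩ [
    (29656, 22860), (9996, 8867), (4657, 4350), (2582, 2471), (1596, 1548), (1064, 1040),
    (749, 736), (549, 542), (417, 412), (324, 321), (258, 256), (209, 208), (172, 171),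
    (144, 143), (122, 121), (104, 103), (89, 89), (78, 77), (68, 68), (60, 60), (53, 53),
    (47, 47), (42, 42), (38, 38), (34, 34), (31, 31), (28, 28), (26, 26), (24, 24), (22, 22),
    (20, 20), (19, 19), (17, 17), (16, 16), (15, 15), (14, 14), (13, 13), (12, 12), (11, 11),
    (11, 11)] 12 = true := by decide +kernel

lemma okU_2 : okU ⟨1, 0, 1, 1⟩ [
    (27872, 24055), (9837, 9185), (4687, 4506), (2633, 2567), (1642, 1613), (1101, 1087),
    (779, 771), (574, 569), (436, 433), (341, 339), (272, 270), (221, 220), (182, 181),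
    (152, 152), (129, 128), (110, 110), (95, 95), (82, 82), (72, 72), (64, 63), (56, 56),
    (50, 50), (45, 45), (40, 40), (37, 37), (33, 33), (30, 30), (28, 28), (25, 25), (23, 23),
    (21, 21), (20, 20), (18, 18), (17, 17), (16, 16), (15, 15), (14, 14), (13, 13), (12, 12),
    (11, 11)] 13 = true := by decide +kernel

lemma okU_3 : okU ⟨2, 0, 0, 1⟩ [
    (27328, 22132), (10137, 9144), (4961, 4668), (2834, 2723), (1788, 1739), (1209, 1184),
    (861, 847), (637, 629), (486, 481), (381, 378), (305, 302), (248, 246), (205, 204),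
    (172, 171), (145, 145), (124, 124), (107, 107), (93, 93), (82, 82), (72, 72), (64, 64),
    (57, 57), (51, 51), (46, 46), (42, 42), (38, 38), (34, 34), (31, 31), (29, 29), (27, 27),
    (24, 24), (23, 23), (21, 21), (19, 19), (18, 18), (17, 17), (16, 16), (15, 15), (14, 14),
    (13, 13)] 15 = true := by decide +kernel

lemma okU_4 : okU ⟨0, 1, 0, 0⟩ [
    (37765, 24294), (9442, 7963), (3851, 3524), (1980, 1875), (1166, 1124), (751, 731),
    (515, 505), (371, 365), (277, 274), (213, 211), (168, 166), (135, 134), (110, 110), (92, 91),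
    (77, 77), (65, 65), (56, 56), (49, 48), (42, 42), (37, 37), (33, 33), (29, 29), (26, 26),
    (23, 23), (21, 21), (19, 19), (17, 17), (16, 16), (15, 15), (13, 13), (12, 12), (11, 11),
    (11, 11), (10, 10), (9, 9), (9, 9), (8, 8), (8, 8), (7, 7), (7, 7)] 7 = true := by decide +kernel

lemma okU_5 : okU ⟨0, 1, 1, 1⟩ [
    (30072, 25148), (9673, 8945), (4405, 4218), (2410, 2344), (1477, 1449), (978, 964),
    (685, 678), (501, 497), (379, 376), (294, 293), (234, 233), (189, 188), (156, 155),
    (130, 129), (109, 109), (93, 93), (80, 80), (70, 70), (61, 61), (54, 54), (48, 47), (42, 42),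
    (38, 38), (34, 34), (31, 31), (28, 28), (25, 25), (23, 23), (21, 21), (20, 20), (18, 18),
    (17, 17), (15, 15), (14, 14), (13, 13), (12, 12), (12, 12), (11, 11), (10, 10), (10, 10)] 11 = true := by decide +kernel

lemma okU_6 : okU ⟨0, 2, 0, 1⟩ [
    (33704, 23991), (9798, 8492), (4272, 3952), (2281, 2172), (1376, 1331), (901, 880),
    (626, 615), (455, 449), (343, 339), (265, 263), (210, 208), (170, 168), (139, 138),
    (116, 115), (98, 97), (83, 83), (71, 71), (62, 62), (54, 54), (48, 47), (42, 42), (37, 37),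
    (34, 33), (30, 30), (27, 27), (25, 25), (22, 22), (21, 20), (19, 19), (17, 17), (16, 16),
    (15, 15), (14, 14), (13, 13), (12, 12), (11, 11), (10, 10), (10, 10), (9, 9), (9, 9)] 9 = true := by decide +kernel

lemma okU_7 : okU ⟨0, 0, 1, 0⟩ [
    (26988, 26988), (9392, 9392), (4425, 4425), (2466, 2466), (1529, 1529), (1020, 1020),
    (719, 719), (528, 528), (401, 401), (312, 312), (248, 248), (202, 202), (166, 166),
    (139, 139), (117, 117), (100, 100), (86, 86), (75, 75), (65, 65), (58, 58), (51, 51),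
    (46, 46), (41, 41), (37, 37), (33, 33), (30, 30), (27, 27), (25, 25), (23, 23), (21, 21),
    (19, 19), (18, 18), (17, 17), (15, 15), (14, 14), (13, 13), (13, 13), (12, 12), (11, 11),
    (10, 10)] 12 = true := by decide +kernel

lemma okU_8 : okU ⟨0, 0, 2, 1⟩ [
    (28327, 25839), (9604, 9218), (4483, 4381), (2488, 2451), (1539, 1523), (1026, 1018),
    (722, 718), (530, 528), (402, 400), (313, 312), (249, 249), (202, 202), (166, 166),
    (139, 139), (117, 117), (100, 100), (86, 86), (75, 75), (66, 66), (58, 58), (51, 51),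
    (46, 46), (41, 41), (37, 37), (33, 33), (30, 30), (27, 27), (25, 25), (23, 23), (21, 21),
    (19, 19), (18, 18), (17, 17), (16, 15), (14, 14), (13, 13), (13, 13), (12, 12), (11, 11),
    (10, 10)] 12 = true := by decide +kernel

end Apo

namespace Apo

def emb (t : Q) : Q := ⟨t.y + t.z, t.x + t.z, t.x + t.y, t.s⟩
def cell (t : Q) : Q := f 0 (f 1 (emb t))
def be (t : Q) : ℝ := t.x + t.y + t.z + 2 * t.s
def al (t : Q) (n : ℕ) : ℝ := t.x + 2 * n * (t.s + t.x + t.z) + n ^ 2 * (be t + t.z)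
def si (t : Q) (n : ℕ) : ℝ := t.s + t.x + t.z + n * (be t + t.z)
def ch1 (t : Q) (n : ℕ) : Q := ⟨be t, al t n, t.z, si t n⟩
def ch2 (t : Q) (n : ℕ) : Q := ⟨t.z, al t n, be t, si t n⟩

lemma f1_run (t : Q) (n : ℕ) : f 1 ((f 0)^[n] (cell t)) = sw1 (cell (ch1 t n)) := by
  rw [f0_it]
  ext <;> simp only [f, cell, emb, ch1, sw1, be, al, si] <;> ring

lemma f2_run (t : Q) (n : ℕ) : f 2 ((f 0)^[n] (cell t)) = sw2 (sw1 (cell (ch2 t n))) := by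
  rw [f0_it]
  ext <;> simp only [f, cell, emb, ch2, sw1, sw2, be, al, si] <;> ring

lemma S_f1_run (φ : ℝ → ℝ) (k : ℕ) (t : Q) (n : ℕ) :
    S φ k (f 1 ((f 0)^[n] (cell t))) = S φ k (cell (ch1 t n)) := by rw [f1_run, S_sw1]

lemma S_f2_run (φ : ℝ → ℝ) (k : ℕ) (t : Q) (n : ℕ) :
    S φ k (f 2 ((f 0)^[n] (cell t))) = S φ k (cell (ch2 t n)) := by rw [f2_run, S_sw2, S_sw1]

structure PQ (t : Q) : Prop where
  x : 0 < t.x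
  y : 0 < t.y
  z : 0 < t.z
  s : 0 < t.s

lemma PQ.be {t : Q} (h : PQ t) : 0 < be t := by
  obtain ⟨h1, h2, h3, h4⟩ := h
  simp only [Apo.be]; positivity

lemma PQ.al {t : Q} (h : PQ t) (n : ℕ) : 0 < al t n := by
  have := h.be
  obtain ⟨h1, h2, h3, h4⟩ := h
  simp only [Apo.al]; positivity

lemma PQ.si {t : Q} (h : PQ t) (n : ℕ) : 0 < si t n := by
  have := h.be
  obtain ⟨h1, h2, h3, h4⟩ := h
  simp only [Apo.si]; positivity

lemma PQ.ch1 {t : Q} (h : PQ t) (n : ℕ) : PQ (ch1 t n) := ⟨h.be, h.al n, h.z, h.si n⟩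
lemma PQ.ch2 {t : Q} (h : PQ t) (n : ℕ) : PQ (ch2 t n) := ⟨h.z, h.al n, h.be, h.si n⟩

lemma PQ.K {t : Q} (h : PQ t) : K (cell t) := by
  obtain ⟨h1, h2, h3, h4⟩ := h
  apply Apo.K.f
  constructor <;> simp only [Apo.f, emb] <;> linarith

/-- upper run decomposition -/
lemma run_le {φ : ℝ → ℝ} (hφ : Pos φ) (k m : ℕ) (hkm : k ≤ m + 1) {q : Q} (h : Apo.K q) :
    S φ k q ≤ ∑ n ∈ Finset.range k, (φ ((f 0)^[n] q).d + S φ m (f 1 ((f 0)^[n] q))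
      + S φ m (f 2 ((f 0)^[n] q))) := by
  induction k generalizing q with
  | zero => simp [S_zero]
  | succ k ih =>
    rw [S_succ, Fin.sum_univ_three, Finset.sum_range_succ']
    have h1 := ih (by omega) (h.f 0)
    have h2 := S_mono hφ (h.f 1) (show k ≤ m by omega)
    have h3 := S_mono hφ (h.f 2) (show k ≤ m by omega)
    simp only [Function.iterate_succ_apply, Function.iterate_zero, id] at h1 h2 h3 ⊢
    linarith

/-- lower run decomposition -/
lemma le_run {φ : ℝ → ℝ} (hφ : Pos φ) (k m : ℕ) {q : Q} (h : Apo.K q) :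
    ∑ n ∈ Finset.range m, (S φ k (f 1 ((f 0)^[n] q)) + S φ k (f 2 ((f 0)^[n] q)))
      ≤ S φ (m + k) q := by
  induction m generalizing q with
  | zero => simpa using S_nonneg hφ k h
  | succ m ih =>
    rw [show m + 1 + k = (m + k) + 1 by ring, S_succ, Fin.sum_univ_three, Finset.sum_range_succ']
    have h1 := ih (h.f 0)
    have h2 := S_mono hφ (h.f 1) (show k ≤ m + k by omega)
    have h3 := S_mono hφ (h.f 2) (show k ≤ m + k by omega)
    have h4 := hφ _ h.d_pos
    simp only [Function.iterate_succ_apply, Function.iterate_zero, id] at h1 h2 h3 ⊢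
    linarith

def V.q (v : V) : Q := ⟨v.a, v.b, v.c, v.s⟩
def dot (y t : Q) : ℝ := y.x * t.x + y.y * t.y + y.z * t.z + y.s * t.s

lemma dot_q (y v : V) : dot y.q v.q = (y.dot v : ℕ) := by
  simp only [dot, V.q, V.dot]; push_cast; ring

lemma ch1_q (v : V) (n : ℕ) : ch1 v.q n = (v.ch1 n).q := by
  ext <;> simp only [ch1, V.ch1, V.q, be, V.be, al, V.al, si, V.si] <;> push_cast <;> ring

lemma ch2_q (v : V) (n : ℕ) : ch2 v.q n = (v.ch2 n).q := by
  ext <;> simp only [ch2, V.ch2, V.q, be, V.be, al, V.al, si, V.si] <;> push_cast <;> ring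

/-- Jensen -/
lemma jen {s : ℝ} (hs : 0 ≤ s) {w X Y : Fin 4 → ℝ} (hw : ∀ i, 0 < w i) (hX : ∀ i, 0 < X i)
    (hY : ∀ i, 0 < Y i) :
    (∑ i, w i * X i) ^ (-s) ≤
      (∑ i, w i * Y i) ^ (-s) * ∑ i, w i * Y i / (∑ i, w i * Y i) * (X i / Y i) ^ (-s) := by
  have hXX : 0 < ∑ i, w i * X i := Finset.sum_pos (fun i _ => mul_pos (hw i) (hX i)) ⟨0, by simp⟩
  have hYY : 0 < ∑ i, w i * Y i := Finset.sum_pos (fun i _ => mul_pos (hw i) (hY i)) ⟨0, by simp⟩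
  set A := ∑ i, w i * X i with hA
  set B := ∑ i, w i * Y i with hB
  have h1 : ∀ i, w i * Y i / B * (1 + s - s * (X i / Y i * (B / A))) ≤
      w i * Y i / B * ((X i / Y i) ^ (-s) * (B ^ (-s) * A ^ s)) := by
    intro i
    have h2 := bern hs (mul_pos (div_pos (hX i) (hY i)) (div_pos hYY hXX))
    rw [Real.mul_rpow (div_pos (hX i) (hY i)).le (div_pos hYY hXX).le,
      Real.div_rpow hYY.le hXX.le, Real.rpow_neg hXX.le, div_inv_eq_mul] at h2
    exact mul_le_mul_of_nonneg_left h2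
      (div_nonneg (mul_pos (hw i) (hY i)).le hYY.le)
  have h3 := Finset.sum_le_sum (s := Finset.univ) (fun i _ => h1 i)
  have h4 : ∑ i, w i * Y i / B * (1 + s - s * (X i / Y i * (B / A))) = 1 := by
    have h5 : ∀ i, w i * Y i / B * (1 + s - s * (X i / Y i * (B / A)))
        = (1 + s) / B * (w i * Y i) - s / A * (w i * X i) := by
      intro i
      have := (hY i).ne'
      field_simp
    simp_rw [h5]
    rw [Finset.sum_sub_distrib, ← Finset.mul_sum, ← Finset.mul_sum, ← hA, ← hB]
    field_simp
    ring
  rw [h4] at h3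
  have h6 : ∑ i, w i * Y i / B * ((X i / Y i) ^ (-s) * (B ^ (-s) * A ^ s))
      = A ^ s * (B ^ (-s) * ∑ i, w i * Y i / B * (X i / Y i) ^ (-s)) := by
    rw [Finset.mul_sum, Finset.mul_sum]
    exact Finset.sum_congr rfl fun i _ => by ring
  rw [h6] at h3
  have h7 : 0 < A ^ s := Real.rpow_pos_of_pos hXX _
  rw [Real.rpow_neg hXX.le]
  exact inv_le_of_inv_le₀ (by
    by_contra hc
    push Not at hc
    have : A ^ s * (B ^ (-s) * ∑ i, w i * Y i / B * (X i / Y i) ^ (-s)) ≤ 0 :=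
      mul_nonpos_of_nonneg_of_nonpos h7.le hc
    linarith) (by
    rw [inv_le_iff_one_le_mul₀' (by
      by_contra hc
      push Not at hc
      have : A ^ s * (B ^ (-s) * ∑ i, w i * Y i / B * (X i / Y i) ^ (-s)) ≤ 0 :=
        mul_nonpos_of_nonneg_of_nonpos h7.le hc
      linarith)]
    linarith)

lemma tU_real {X Y c : ℕ} (hX : 0 < X) (hY : 0 < Y) (h : tU X Y c = true) :
    ((X : ℝ) / Y) ^ (-(1.31 : ℝ)) ≤ c / 100000 := by
  have h1 : 100000 ^ 100 * Y ^ 131 ≤ c ^ 100 * X ^ 131 := Nat.le_of_ble_eq_true h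
  have h2 : (100000 : ℝ) ^ 100 * (Y : ℝ) ^ 131 ≤ (c : ℝ) ^ 100 * (X : ℝ) ^ 131 := by
    exact_mod_cast h1
  have hX' : (0 : ℝ) < X := by exact_mod_cast hX
  have hY' : (0 : ℝ) < Y := by exact_mod_cast hY
  have h0 : (0 : ℝ) < (X : ℝ) / Y := div_pos hX' hY'
  refine le_of_pow_le_pow_left₀ (n := 100) (by norm_num) (by positivity) ?_
  rw [← Real.rpow_natCast, ← Real.rpow_mul h0.le,
    show (-(1.31 : ℝ)) * ((100 : ℕ) : ℝ) = -((131 : ℕ) : ℝ) by norm_num, Real.rpow_neg h0.le,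
    Real.rpow_natCast, ← inv_pow, inv_div, div_pow, div_pow, div_le_div_iff₀ (by positivity)
      (by positivity)]
  linarith

/-- the ratio terms -/
noncomputable def rr (s : ℝ) (y t : Q) (n : ℕ) : ℝ :=
  (dot y (ch1 t n) / dot y t) ^ (-s) + (dot y (ch2 t n) / dot y t) ^ (-s)

structure PV (v : V) : Prop where
  a : 0 < v.be

lemma PV.dot {v : V} (h : PV v) : 0 < yU.dot v := by
  have := h.a
  simp only [V.be] at this
  simp only [V.dot, yU]; omega

lemma PV.ch1 {v : V} (h : PV v) (n : ℕ) : 0 < yU.dot (v.ch1 n) := by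
  have := h.a
  simp only [V.dot, yU, V.ch1]
  positivity

lemma PV.ch2 {v : V} (h : PV v) (n : ℕ) : 0 < yU.dot (v.ch2 n) := by
  have := h.a
  simp only [V.dot, yU, V.ch2]
  positivity

lemma cU_real {v : V} (h : PV v) (l : List (ℕ × ℕ)) (n : ℕ) (hl : cU v n l = true) :
    ∑ k ∈ Finset.range l.length, rr 1.31 yU.q v.q (n + k) ≤ (sumL l : ℝ) / 100000 := by
  induction l generalizing n with
  | nil => simp [sumL]
  | cons p l ih =>
    simp only [cU, Bool.and_eq_true] at hl
    obtain ⟨h1, h2, h3⟩ := hl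
    have h4 := ih (n + 1) h3
    have h5 := tU_real (h.ch1 n) h.dot h1
    have h6 := tU_real (h.ch2 n) h.dot h2
    rw [List.length_cons, Finset.sum_range_succ']
    simp only [sumL]
    rw [Finset.sum_congr rfl (fun k _ => by rw [show n + (k + 1) = n + 1 + k by ring])]
    have h8 : rr 1.31 yU.q v.q (n + 0) ≤ (p.1 : ℝ) / 100000 + (p.2 : ℝ) / 100000 := by
      simp only [rr, ch1_q, ch2_q, dot_q, add_zero]
      linarith
    push_cast
    linarith

lemma dot1_ge {v : V} (n : ℕ) : (1000 * (v.be + v.c) * n ^ 2 : ℕ) ≤ yU.dot (v.ch1 n) := by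
  simp only [V.dot, yU, V.ch1, V.al]
  nlinarith [Nat.zero_le (n * (v.s + v.a + v.c))]

lemma dot2_ge {v : V} (n : ℕ) : (1000 * (v.be + v.c) * n ^ 2 : ℕ) ≤ yU.dot (v.ch2 n) := by
  simp only [V.dot, yU, V.ch2, V.al]
  nlinarith [Nat.zero_le (n * (v.s + v.a + v.c))]

lemma tail_le {v : V} (h : PV v) (m : ℕ) :
    ∑ k ∈ Finset.range m, rr 1.31 yU.q v.q (40 + k) ≤
      200 / 162 * 39 * (((1000 * (v.be + v.c) * 39 ^ 2 : ℕ) : ℝ) / (yU.dot v : ℕ)) ^ (-(1.31 : ℝ)) := by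
  set p : ℝ := ((1000 * (v.be + v.c) : ℕ) : ℝ) / (yU.dot v : ℕ) with hp
  have hY : (0 : ℝ) < (yU.dot v : ℕ) := by exact_mod_cast h.dot
  have hb : (0 : ℝ) < ((1000 * (v.be + v.c) : ℕ) : ℝ) := by
    have := h.a
    exact_mod_cast (by positivity)
  have hp0 : 0 < p := div_pos hb hY
  have e1 : ∀ n : ℕ, 0 < n → (p * (n : ℝ) ^ 2) ^ (-(1.31 : ℝ)) = p ^ (-(1.31 : ℝ)) * (n : ℝ) ^ (-(2.62 : ℝ)) := by
    intro n hn
    have hn' : (0 : ℝ) < n := by exact_mod_cast hn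
    rw [Real.mul_rpow hp0.le (by positivity), ← Real.rpow_natCast, ← Real.rpow_mul hn'.le]
    norm_num
  have e2 : ∀ n : ℕ, 0 < n → rr 1.31 yU.q v.q n ≤ 2 * (p ^ (-(1.31 : ℝ)) * (n : ℝ) ^ (-(2.62 : ℝ))) := by
    intro n hn
    have hn' : (0 : ℝ) < n := by exact_mod_cast hn
    rw [← e1 n hn]
    simp only [rr, ch1_q, ch2_q, dot_q]
    have k1 : p * (n : ℝ) ^ 2 ≤ ((yU.dot (v.ch1 n) : ℕ) : ℝ) / (yU.dot v : ℕ) := by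
      rw [hp, div_mul_eq_mul_div]
      gcongr
      exact_mod_cast dot1_ge n
    have k2 : p * (n : ℝ) ^ 2 ≤ ((yU.dot (v.ch2 n) : ℕ) : ℝ) / (yU.dot v : ℕ) := by
      rw [hp, div_mul_eq_mul_div]
      gcongr
      exact_mod_cast dot2_ge n
    have k3 := Real.rpow_le_rpow_of_nonpos (z := -(1.31 : ℝ)) (by positivity) k1 (by norm_num)
    have k4 := Real.rpow_le_rpow_of_nonpos (z := -(1.31 : ℝ)) (by positivity) k2 (by norm_num)
    linarith
  have e3 : ∀ m : ℕ, ∑ k ∈ Finset.range m, ((40 + k : ℕ) : ℝ) ^ (-(2.62 : ℝ)) ≤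
      1 / 1.62 * ((39 : ℝ) ^ (-(1.62 : ℝ)) - ((39 + m : ℕ) : ℝ) ^ (-(1.62 : ℝ))) := by
    intro m
    induction m with
    | zero => norm_num
    | succ m ih =>
      rw [Finset.sum_range_succ]
      have h1 := tangent (s := 2.62) (a := ((39 + m : ℕ) : ℝ)) (b := ((40 + m : ℕ) : ℝ)) (by norm_num)
        (by positivity) (by push_cast; linarith)
      rw [show ((40 + m : ℕ) : ℝ) - ((39 + m : ℕ) : ℝ) = 1 by push_cast; ring,
        show (1 : ℝ) - 2.62 = -1.62 by norm_num] at h1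
      rw [show 39 + (m + 1) = 40 + m by ring]
      norm_num at h1 ih ⊢
      linarith
  have e4 : (((1000 * (v.be + v.c) * 39 ^ 2 : ℕ) : ℝ) / (yU.dot v : ℕ)) ^ (-(1.31 : ℝ))
      = p ^ (-(1.31 : ℝ)) * (39 : ℝ) ^ (-(2.62 : ℝ)) := by
    have := e1 39 (by norm_num)
    push_cast at this
    rw [← this, hp]
    push_cast
    congr 1
    ring
  have e5 : (39 : ℝ) ^ (-(1.62 : ℝ)) = 39 * (39 : ℝ) ^ (-(2.62 : ℝ)) := by
    rw [show -(1.62 : ℝ) = -(2.62 : ℝ) + 1 by norm_num, Real.rpow_add_one (by norm_num)]; ring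
  rw [e4]
  have hpp : 0 < p ^ (-(1.31 : ℝ)) := Real.rpow_pos_of_pos hp0 _
  calc _ ≤ ∑ k ∈ Finset.range m, 2 * (p ^ (-(1.31 : ℝ)) * ((40 + k : ℕ) : ℝ) ^ (-(2.62 : ℝ))) :=
        Finset.sum_le_sum fun k _ => e2 _ (by positivity)
    _ = 2 * p ^ (-(1.31 : ℝ)) * ∑ k ∈ Finset.range m, ((40 + k : ℕ) : ℝ) ^ (-(2.62 : ℝ)) := by
        rw [Finset.mul_sum]; exact Finset.sum_congr rfl fun _ _ => by ring
    _ ≤ 2 * p ^ (-(1.31 : ℝ)) * (1 / 1.62 * (39 : ℝ) ^ (-(1.62 : ℝ))) := by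
        gcongr
        refine (e3 m).trans ?_
        have : 0 < ((39 + m : ℕ) : ℝ) ^ (-(1.62 : ℝ)) := Real.rpow_pos_of_pos (by positivity) _
        gcongr
        linarith
    _ = _ := by rw [e5]; ring

lemma rr_nonneg {s : ℝ} {v : V} (h : PV v) (n : ℕ) : 0 ≤ rr s yU.q v.q n := by
  simp only [rr, ch1_q, ch2_q, dot_q]; positivity

lemma okU_real {v : V} (h : PV v) {l : List (ℕ × ℕ)} {c : ℕ} (hl : okU v l c = true) (m : ℕ) :
    ∑ n ∈ Finset.range m, rr 1.31 yU.q v.q n ≤ 0.999 := by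
  simp only [okU, Bool.and_eq_true] at hl
  obtain ⟨h1, h2, h3, h4⟩ := hl
  have h3 : l.length = 40 := Nat.eq_of_beq_eq_true h3
  have h4 : 162 * sumL l + 200 * 39 * c ≤ 999 * 162 * 100 := Nat.le_of_ble_eq_true h4
  have h5 := cU_real h l 0 h1
  rw [h3] at h5
  simp only [zero_add] at h5
  have h6 := tail_le h m
  have h7 := tU_real (by have := h.a; positivity) h.dot h2
  have h8 : (162 * sumL l + 200 * 39 * c : ℝ) ≤ 999 * 162 * 100 := by exact_mod_cast h4
  calc _ ≤ ∑ n ∈ Finset.range (40 + m), rr 1.31 yU.q v.q n :=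
        Finset.sum_le_sum_of_subset_of_nonneg (by intro x; simp; omega)
          fun n _ _ => rr_nonneg h n
    _ = _ := Finset.sum_range_add _ _ _
    _ ≤ _ := by linarith

end Apo

namespace Apo

def vert : Fin 3 → Fin 4 → V :=
  ![![⟨1, 0, 0, 0⟩, ⟨1, 1, 0, 1⟩, ⟨1, 0, 1, 1⟩, ⟨2, 0, 0, 1⟩],
    ![⟨1, 1, 0, 1⟩, ⟨0, 1, 0, 0⟩, ⟨0, 1, 1, 1⟩, ⟨0, 2, 0, 1⟩],
    ![⟨1, 0, 1, 1⟩, ⟨0, 1, 1, 1⟩, ⟨0, 0, 1, 0⟩, ⟨0, 0, 2, 1⟩]]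

lemma vert_PV (i : Fin 3) (k : Fin 4) : PV (vert i k) := by
  fin_cases i <;> fin_cases k <;> exact ⟨by simp [vert, V.be]⟩

lemma vert_ok (i : Fin 3) (k : Fin 4) (m : ℕ) :
    ∑ n ∈ Finset.range m, rr 1.31 yU.q (vert i k).q n ≤ 0.999 := by
  have h := vert_PV i k
  fin_cases i <;> fin_cases k
  · exact okU_real h okU_0 m
  · exact okU_real h okU_1 m
  · exact okU_real h okU_2 m
  · exact okU_real h okU_3 m
  · exact okU_real h okU_1 m
  · exact okU_real h okU_4 m
  · exact okU_real h okU_5 m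
  · exact okU_real h okU_6 m
  · exact okU_real h okU_2 m
  · exact okU_real h okU_5 m
  · exact okU_real h okU_7 m
  · exact okU_real h okU_8 m

def comb (i : Fin 3) (w : Fin 4 → ℝ) : Q :=
  ⟨∑ k, w k * (vert i k).a, ∑ k, w k * (vert i k).b, ∑ k, w k * (vert i k).c,
    ∑ k, w k * (vert i k).s⟩

def InC (t : Q) : Prop := ∃ i w, (∀ k, 0 < w k) ∧ t = comb i w

lemma InC.PQ {t : Q} (h : InC t) : PQ t := by
  obtain ⟨i, w, hw, rfl⟩ := h
  have h0 := hw 0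
  have h1 := hw 1
  have h2 := hw 2
  have h3 := hw 3
  fin_cases i <;> constructor <;> simp [comb, vert, Fin.sum_univ_four] <;> positivity

lemma InC.ch1 {t : Q} (h : Apo.PQ t) (n : ℕ) : InC (ch1 t n) := by
  cases n with
  | zero =>
    refine ⟨0, ![t.y, t.x, t.z, t.s], ?_, ?_⟩
    · intro k; fin_cases k
      exacts [h.y, h.x, h.z, h.s]
    · ext <;> simp [comb, vert, Fin.sum_univ_four, Apo.ch1, be, al, si] <;> ring
  | succ n =>
    refine ⟨1, ![be t, al t n, t.z, si t n], ?_, ?_⟩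
    · intro k; fin_cases k
      exacts [h.be, h.al n, h.z, h.si n]
    · ext <;> simp [comb, vert, Fin.sum_univ_four, Apo.ch1, be, al, si] <;> ring

lemma InC.ch2 {t : Q} (h : Apo.PQ t) (n : ℕ) : InC (ch2 t n) := by
  cases n with
  | zero =>
    refine ⟨2, ![t.z, t.x, t.y, t.s], ?_, ?_⟩
    · intro k; fin_cases k
      exacts [h.z, h.x, h.y, h.s]
    · ext <;> simp [comb, vert, Fin.sum_univ_four, Apo.ch2, be, al, si] <;> ring
  | succ n =>
    refine ⟨1, ![t.z, al t n, be t, si t n], ?_, ?_⟩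
    · intro k; fin_cases k
      exacts [h.z, h.al n, h.be, h.si n]
    · ext <;> simp [comb, vert, Fin.sum_univ_four, Apo.ch2, be, al, si] <;> ring

lemma comb_dot (y : Q) (i : Fin 3) (w : Fin 4 → ℝ) :
    dot y (comb i w) = ∑ k, w k * dot y (vert i k).q := by
  simp only [dot, comb, V.q, Fin.sum_univ_four]; ring

lemma comb_ch1 (y : Q) (i : Fin 3) (w : Fin 4 → ℝ) (n : ℕ) :
    dot y (ch1 (comb i w) n) = ∑ k, w k * dot y (ch1 (vert i k).q n) := by
  simp only [dot, comb, V.q, Fin.sum_univ_four, ch1, be, al, si]; ring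

lemma comb_ch2 (y : Q) (i : Fin 3) (w : Fin 4 → ℝ) (n : ℕ) :
    dot y (ch2 (comb i w) n) = ∑ k, w k * dot y (ch2 (vert i k).q n) := by
  simp only [dot, comb, V.q, Fin.sum_univ_four, ch2, be, al, si]; ring

lemma dotv_pos (i : Fin 3) (k : Fin 4) : 0 < dot yU.q (vert i k).q := by
  rw [dot_q]; exact_mod_cast (vert_PV i k).dot
lemma dotv1_pos (i : Fin 3) (k : Fin 4) (n : ℕ) : 0 < dot yU.q (ch1 (vert i k).q n) := by
  rw [ch1_q, dot_q]; exact_mod_cast (vert_PV i k).ch1 n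
lemma dotv2_pos (i : Fin 3) (k : Fin 4) (n : ℕ) : 0 < dot yU.q (ch2 (vert i k).q n) := by
  rw [ch2_q, dot_q]; exact_mod_cast (vert_PV i k).ch2 n

lemma PQ.dot {t y : Q} (hy : PQ y) (h : PQ t) : 0 < dot y t := by
  obtain ⟨h1, h2, h3, h4⟩ := h
  obtain ⟨k1, k2, k3, k4⟩ := hy
  simp only [Apo.dot]; positivity

lemma PyU : PQ yU.q := by constructor <;> norm_num [yU, V.q]

lemma up_sum {t : Q} (h : InC t) (m : ℕ) :
    ∑ n ∈ Finset.range m, ((dot yU.q (ch1 t n)) ^ (-(1.31 : ℝ)) + (dot yU.q (ch2 t n)) ^ (-(1.31 : ℝ)))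
      ≤ 0.999 * (dot yU.q t) ^ (-(1.31 : ℝ)) := by
  have hY := PyU.dot h.PQ
  obtain ⟨i, w, hw, rfl⟩ := h
  set Y := dot yU.q (comb i w) with hYd
  have hYs : Y = ∑ k, w k * dot yU.q (vert i k).q := comb_dot _ _ _
  have hYp : 0 < Y ^ (-(1.31 : ℝ)) := Real.rpow_pos_of_pos hY _
  calc _ ≤ ∑ n ∈ Finset.range m, Y ^ (-(1.31 : ℝ)) *
        ∑ k, w k * dot yU.q (vert i k).q / Y * rr 1.31 yU.q (vert i k).q n := by
        refine Finset.sum_le_sum fun n _ => ?_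
        have j1 := jen (s := 1.31) (by norm_num) hw (fun k => dotv1_pos i k n) (dotv_pos i)
        have j2 := jen (s := 1.31) (by norm_num) hw (fun k => dotv2_pos i k n) (dotv_pos i)
        rw [← hYs, ← comb_ch1] at j1
        rw [← hYs, ← comb_ch2] at j2
        simp only [rr, mul_add, Finset.sum_add_distrib]
        rw [← mul_add]
        linarith
    _ = Y ^ (-(1.31 : ℝ)) * ∑ k, w k * dot yU.q (vert i k).q / Y *
        ∑ n ∈ Finset.range m, rr 1.31 yU.q (vert i k).q n := by
        rw [← Finset.mul_sum, Finset.sum_comm]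
        simp_rw [Finset.mul_sum]
    _ ≤ Y ^ (-(1.31 : ℝ)) * ∑ k, w k * dot yU.q (vert i k).q / Y * 0.999 := by
        refine mul_le_mul_of_nonneg_left (Finset.sum_le_sum fun k _ => ?_) hYp.le
        exact mul_le_mul_of_nonneg_left (vert_ok i k m)
          (div_nonneg (mul_pos (hw k) (dotv_pos i k)).le hY.le)
    _ = _ := by
        rw [← Finset.sum_mul, ← Finset.sum_div, ← hYs, div_self hY.ne']; ring

lemma d_run {t : Q} (h : PQ t) (n : ℕ) :
    dot yU.q (ch1 t n) / 3000 ≤ ((f 0)^[n] (cell t)).d := by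
  rw [f0_it]
  have hb := h.be
  have hn : (0 : ℝ) ≤ n := Nat.cast_nonneg n
  obtain ⟨h1, h2, h3, h4⟩ := h
  have m1 := mul_nonneg hn h1.le
  have m2 := mul_nonneg hn h2.le
  have m3 := mul_nonneg hn h3.le
  have m4 := mul_nonneg hn h4.le
  have m5 := mul_nonneg hn m1
  have m6 := mul_nonneg hn m2
  have m7 := mul_nonneg hn m3
  have m8 := mul_nonneg hn m4
  simp only [Q.d, cell, emb, f, dot, ch1, al, si, be, yU, V.q]
  push_cast
  nlinarith

lemma up_main (k : ℕ) {t : Q} (h : InC t) :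
    S (pw 1.31) k (cell t) ≤ 9000000000 * (dot yU.q t) ^ (-(1.31 : ℝ)) := by
  induction k generalizing t with
  | zero =>
    rw [S_zero]
    have := PyU.dot h.PQ
    positivity
  | succ k ih =>
    refine (run_le (pw_pos _) (k + 1) k le_rfl h.PQ.K).trans ?_
    have hY := PyU.dot h.PQ
    have hYp : 0 < dot yU.q t ^ (-(1.31 : ℝ)) := Real.rpow_pos_of_pos hY _
    have h1 : ∀ n ∈ Finset.range (k + 1), pw 1.31 ((f 0)^[n] (cell t)).d
        + S (pw 1.31) k (f 1 ((f 0)^[n] (cell t))) + S (pw 1.31) k (f 2 ((f 0)^[n] (cell t)))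
        ≤ 9009000000 * ((dot yU.q (ch1 t n)) ^ (-(1.31 : ℝ)) + (dot yU.q (ch2 t n)) ^ (-(1.31 : ℝ))) := by
      intro n _
      rw [S_f1_run, S_f2_run]
      have h2 := ih (InC.ch1 h.PQ n)
      have h3 := ih (InC.ch2 h.PQ n)
      have p1 := PyU.dot (h.PQ.ch1 n)
      have p2 := PyU.dot (h.PQ.ch2 n)
      have h4 := Real.rpow_le_rpow_of_nonpos (z := -(1.31 : ℝ)) (by positivity) (d_run h.PQ n)
        (by norm_num)
      rw [Real.div_rpow p1.le (by norm_num)] at h4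
      have h5 : dot yU.q (ch1 t n) ^ (-(1.31 : ℝ)) / 3000 ^ (-(1.31 : ℝ))
          ≤ 9000000 * dot yU.q (ch1 t n) ^ (-(1.31 : ℝ)) := by
        rw [Real.rpow_neg (by norm_num) (1.31 : ℝ) (x := 3000), div_inv_eq_mul, mul_comm]
        gcongr
        calc (3000 : ℝ) ^ (1.31 : ℝ) ≤ (3000 : ℝ) ^ (2 : ℝ) :=
              Real.rpow_le_rpow_of_exponent_le (by norm_num) (by norm_num)
          _ ≤ 9000000 := by norm_num
      have h6 : 0 < dot yU.q (ch2 t n) ^ (-(1.31 : ℝ)) := Real.rpow_pos_of_pos p2 _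
      simp only [pw] at h2 h3 ⊢
      linarith
    refine (Finset.sum_le_sum h1).trans ?_
    rw [← Finset.mul_sum]
    have := up_sum h (k + 1)
    linarith

theorem numU : Bd 1.31 := by
  have hP : PQ ⟨1, 1, 1, 1⟩ := by constructor <;> norm_num
  have hC := InC.ch1 hP 0
  have hd := hC.PQ.K.d_pos
  obtain ⟨μ, hμ, hμ'⟩ : ∃ μ : ℝ, 0 < μ ∧ Le (sc μ (cell (ch1 ⟨1, 1, 1, 1⟩ 0))) e := by
    refine ⟨1 / (2 * (cell (ch1 ⟨1, 1, 1, 1⟩ 0)).d), by positivity, ?_⟩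
    have h1 := (le_two_d hC.PQ.K).sc (a := 1 / (2 * (cell (ch1 ⟨1, 1, 1, 1⟩ 0)).d)) (by positivity)
    rw [sc_sc, one_div_mul_cancel (by positivity), sc_one] at h1
    exact h1
  refine ⟨μ ^ (-(1.31 : ℝ)) * (9000000000 * (dot yU.q (ch1 ⟨1, 1, 1, 1⟩ 0)) ^ (-(1.31 : ℝ))), fun t => ?_⟩
  refine (S_anti (pw_anti (by norm_num)) t (hC.PQ.K.sc hμ) Ke hμ').trans ?_
  rw [p_sc _ hμ t hC.PQ.K]
  exact mul_le_mul_of_nonneg_left (up_main t hC) (by positivity)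

end Apo

namespace Apo

/-! ### lower bound -/

def yL : V := ⟨2073, 1000, 2856, 2831⟩
def vL : V := ⟨100, 115, 112, 111⟩

def tL (X Y c : ℕ) : Bool := Nat.ble (c ^ 10 * X ^ 13) (1000000000 ^ 10 * Y ^ 13)

def cL : ℕ → List (ℕ × ℕ) → Bool
  | _, [] => true
  | n, p :: l => tL (yL.dot (vL.ch1 n)) (yL.dot vL) p.1 &&
      (tL (yL.dot (vL.ch2 n)) (yL.dot vL) p.2 && cL (n + 1) l)

def cr (c X : ℕ) : ℕ := c * yL.dot vL / X + 1

def wL (v : V) : ℕ → List (ℕ × ℕ) → ℕ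
  | _, [] => 0
  | n, p :: l => cr p.1 (yL.dot (vL.ch1 n)) * yL.dot (v.ch1 n) +
      cr p.2 (yL.dot (vL.ch2 n)) * yL.dot (v.ch2 n) + wL v (n + 1) l

def hL (l : List (ℕ × ℕ)) (v : V) : Bool :=
  Nat.ble (13 * wL v 0 l + 10010000000 * yL.dot v) (23 * sumL l * yL.dot v)

def okL (l : List (ℕ × ℕ)) : Bool :=
  cL 0 l && (Nat.beq l.length 80 &&
    (hL l ⟨1, 0, 0, 0⟩ && (hL l ⟨0, 1, 0, 0⟩ && (hL l ⟨0, 0, 1, 0⟩ && hL l ⟨0, 0, 0, 1⟩))))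

lemma exL : ∃ l, okL l = true := ⟨[
    (290933300, 245816405), (99336963, 92027607), (46385340, 44428673), (25729323, 25030058),
    (15911654, 15610614), (10605596, 10458068), (7466536, 7387014), (5480514, 5434409),
    (4157126, 4128811), (3238131, 3219913), (2578130, 2565948), (2090702, 2082289),
    (1722134, 1716161), (1437762, 1433420), (1214490, 1211268), (1036496, 1034062),
    (892679, 890809), (775081, 773625), (677891, 676742), (596794, 595876), (528534, 527794),
    (470627, 470024), (421146, 420651), (378587, 378177), (341759, 341416), (309711, 309424),
    (281679, 281436), (257041, 256834), (235289, 235112), (216005, 215853), (198843, 198711),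
    (183512, 183398), (169770, 169671), (157414, 157327), (146268, 146192), (136186, 136119),
    (127041, 126982), (118725, 118672), (111144, 111097), (104218, 104176), (97875, 97837),
    (92054, 92020), (86701, 86671), (81771, 81743), (77220, 77195), (73012, 72990),
    (69116, 69095), (65501, 65483), (62143, 62126), (59019, 59003), (56108, 56094),
    (53392, 53379), (50855, 50843), (48482, 48471), (46259, 46249), (44175, 44166),
    (42219, 42210), (40381, 40373), (38651, 38644), (37023, 37016), (35488, 35482),
    (34040, 34034), (32672, 32667), (31380, 31375), (30157, 30152), (28999, 28994),
    (27901, 27897), (26861, 26857), (25873, 25869), (24935, 24932), (24043, 24040),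
    (23195, 23192), (22388, 22385), (21619, 21617), (20886, 20884), (20188, 20185),
    (19521, 19519), (18884, 18882), (18276, 18274), (17694, 17692)],
    by decide +kernel⟩

lemma tL_real {X Y c : ℕ} (hX : 0 < X) (hY : 0 < Y) (h : tL X Y c = true) :
    (c : ℝ) / 1000000000 ≤ ((X : ℝ) / Y) ^ (-(1.3 : ℝ)) := by
  have h1 : c ^ 10 * X ^ 13 ≤ 1000000000 ^ 10 * Y ^ 13 := Nat.le_of_ble_eq_true h
  have h2 : (c : ℝ) ^ 10 * (X : ℝ) ^ 13 ≤ (1000000000 : ℝ) ^ 10 * (Y : ℝ) ^ 13 := by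
    exact_mod_cast h1
  have hX' : (0 : ℝ) < X := by exact_mod_cast hX
  have hY' : (0 : ℝ) < Y := by exact_mod_cast hY
  have h0 : (0 : ℝ) < (X : ℝ) / Y := div_pos hX' hY'
  refine le_of_pow_le_pow_left₀ (n := 10) (by norm_num) (by positivity) ?_
  rw [← Real.rpow_natCast (((X : ℝ) / Y) ^ (-(1.3 : ℝ))), ← Real.rpow_mul h0.le,
    show (-(1.3 : ℝ)) * ((10 : ℕ) : ℝ) = -((13 : ℕ) : ℝ) by norm_num, Real.rpow_neg h0.le,
    Real.rpow_natCast, ← inv_pow, inv_div, div_pow, div_pow, div_le_div_iff₀ (by positivity)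
      (by positivity)]
  linarith

lemma tL_use {X Y c : ℕ} (hX : 0 < X) (hY : 0 < yL.dot vL) (h : tL X Y c = true)
    (hYe : Y = yL.dot vL) {x : ℝ} (hx : 0 < x) :
    (2.3 * c - 1.3 * (cr c X) * x) / 1000000000 ≤ x ^ (-(1.3 : ℝ)) := by
  subst hYe
  have hX' : (0 : ℝ) < X := by exact_mod_cast hX
  have hY' : (0 : ℝ) < (yL.dot vL : ℕ) := by exact_mod_cast hY
  set R : ℝ := (X : ℝ) / (yL.dot vL : ℕ) with hR
  have hR0 : 0 < R := div_pos hX' hY'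
  have h1 := tL_real hX hY h
  have h2 := bern (s := 1.3) (by norm_num) (div_pos hx hR0)
  have h3 : x ^ (-(1.3 : ℝ)) = R ^ (-(1.3 : ℝ)) * (x / R) ^ (-(1.3 : ℝ)) := by
    rw [← Real.mul_rpow hR0.le (div_pos hx hR0).le, mul_div_cancel₀ _ hR0.ne']
  have h4 : (c : ℝ) / R ≤ cr c X := by
    rw [hR, div_div_eq_mul_div, div_le_iff₀ hX']
    have : c * yL.dot vL < (c * yL.dot vL / X + 1) * X := by
      have := Nat.lt_mul_div_succ (c * yL.dot vL) hX
      rwa [mul_comm X] at this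
    exact_mod_cast this.le
  have h5 : (2.3 * c - 1.3 * (cr c X) * x) / 1000000000 ≤
      (c : ℝ) / 1000000000 * (1 + 1.3 - 1.3 * (x / R)) := by
    have h6 : (c : ℝ) / 1000000000 * (1 + 1.3 - 1.3 * (x / R)) =
      (2.3 * c - 1.3 * (c / R) * x) / 1000000000 := by ring
    rw [h6]
    gcongr
  refine h5.trans ?_
  rw [h3]
  rcases le_total 0 (1 + 1.3 - 1.3 * (x / R)) with hb | hb
  · exact mul_le_mul h1 h2 hb (by positivity)
  · exact (mul_nonpos_of_nonneg_of_nonpos (by positivity) hb).trans (by positivity)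

noncomputable def WL (t : Q) : ℕ → List (ℕ × ℕ) → ℝ
  | _, [] => 0
  | n, p :: l => cr p.1 (yL.dot (vL.ch1 n)) * dot yL.q (ch1 t n) +
      cr p.2 (yL.dot (vL.ch2 n)) * dot yL.q (ch2 t n) + WL t (n + 1) l

lemma WL_q (v : V) (n : ℕ) (l : List (ℕ × ℕ)) : WL v.q n l = (wL v n l : ℕ) := by
  induction l generalizing n with
  | nil => simp [WL, wL]
  | cons p l ih =>
    simp only [WL, wL, ih, ch1_q, ch2_q, dot_q]; push_cast; ring

lemma WL_lin (t : Q) (n : ℕ) (l : List (ℕ × ℕ)) :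
    WL t n l = t.x * WL (V.q ⟨1, 0, 0, 0⟩) n l + t.y * WL (V.q ⟨0, 1, 0, 0⟩) n l
      + t.z * WL (V.q ⟨0, 0, 1, 0⟩) n l + t.s * WL (V.q ⟨0, 0, 0, 1⟩) n l := by
  induction l generalizing n with
  | nil => simp [WL]
  | cons p l ih =>
    simp only [WL]
    rw [ih (n + 1)]
    simp only [dot, ch1, ch2, be, al, si, V.q]
    push_cast
    ring

lemma PyL : PQ yL.q := by constructor <;> norm_num [yL, V.q]

lemma cL_real {t : Q} (h : PQ t) (l : List (ℕ × ℕ)) (n : ℕ) (hl : cL n l = true) :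
    (2.3 * (sumL l : ℕ) - 1.3 * (WL t n l / dot yL.q t)) / 1000000000 ≤
    ∑ k ∈ Finset.range l.length, rr 1.3 yL.q t (n + k) := by
  induction l generalizing n with
  | nil => simp [sumL, WL]
  | cons p l ih =>
    simp only [cL, Bool.and_eq_true] at hl
    obtain ⟨h1, h2, h3⟩ := hl
    have h4 := ih (n + 1) h3
    have hY : 0 < yL.dot vL := by decide
    have h5 := tL_use (by simp only [V.dot, yL, V.ch1, V.be, vL]; positivity) hY h1 rfl
      (div_pos (PyL.dot (h.ch1 n)) (PyL.dot h))
    have h6 := tL_use (by simp only [V.dot, yL, V.ch2, V.be, vL]; positivity) hY h2 rfl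
      (div_pos (PyL.dot (h.ch2 n)) (PyL.dot h))
    rw [List.length_cons, Finset.sum_range_succ']
    simp only [sumL, WL]
    rw [Finset.sum_congr rfl (fun k _ => by rw [show n + (k + 1) = n + 1 + k by ring])]
    rw [add_zero]
    have h8 := add_le_add (add_le_add h5 h6) h4
    have h9 : rr 1.3 yL.q t n = (dot yL.q (ch1 t n) / dot yL.q t) ^ (-(1.3 : ℝ))
      + (dot yL.q (ch2 t n) / dot yL.q t) ^ (-(1.3 : ℝ)) := rfl
    rw [h9]
    refine le_trans (le_of_eq ?_) (h8.trans (le_of_eq (by ring)))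
    push_cast
    ring

lemma low_rr {t : Q} (h : PQ t) : 1.001 ≤ ∑ n ∈ Finset.range 80, rr 1.3 yL.q t n := by
  obtain ⟨l, hl⟩ := exL
  simp only [okL, Bool.and_eq_true] at hl
  obtain ⟨h1, h2, g1, g2, g3, g4⟩ := hl
  have h2 : l.length = 80 := Nat.eq_of_beq_eq_true h2
  have h3 := cL_real h l 0 h1
  rw [h2] at h3
  simp only [zero_add] at h3
  refine le_trans ?_ h3
  have hY := PyL.dot h
  have key : ∀ v, hL l v = true →
      13 * WL v.q 0 l + 10010000000 * dot yL.q v.q ≤ 23 * (sumL l : ℕ) * dot yL.q v.q := by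
    intro v hv
    have : 13 * wL v 0 l + 10010000000 * yL.dot v ≤ 23 * sumL l * yL.dot v :=
      Nat.le_of_ble_eq_true hv
    rw [WL_q, dot_q]
    exact_mod_cast this
  have k1 := mul_le_mul_of_nonneg_left (key _ g1) h.x.le
  have k2 := mul_le_mul_of_nonneg_left (key _ g2) h.y.le
  have k3 := mul_le_mul_of_nonneg_left (key _ g3) h.z.le
  have k4 := mul_le_mul_of_nonneg_left (key _ g4) h.s.le
  have hW := WL_lin t 0 l
  have hD : dot yL.q t = t.x * dot yL.q (V.q ⟨1, 0, 0, 0⟩) + t.y * dot yL.q (V.q ⟨0, 1, 0, 0⟩)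
      + t.z * dot yL.q (V.q ⟨0, 0, 1, 0⟩) + t.s * dot yL.q (V.q ⟨0, 0, 0, 1⟩) := by
    simp only [dot, V.q]; push_cast; ring
  have k5 : 13 * WL t 0 l + 10010000000 * dot yL.q t ≤ 23 * (sumL l : ℕ) * dot yL.q t := by
    rw [hW, hD]; linarith
  have k6 : 13 * (WL t 0 l / dot yL.q t) + 10010000000 ≤ 23 * (sumL l : ℕ) := by
    have k7 := div_le_div_of_nonneg_right k5 hY.le
    rw [add_div, mul_div_assoc, mul_div_cancel_right₀ _ hY.ne', mul_div_cancel_right₀ _ hY.ne'] at k7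
    exact k7
  rw [le_div_iff₀ (by norm_num)]
  linarith

lemma low_K {t : Q} (h : PQ t) {n : ℕ} (hn : n < 80) :
    dot yL.q (ch1 t n) ≤ 1000000 * dot yL.q t ∧ dot yL.q (ch2 t n) ≤ 1000000 * dot yL.q t := by
  obtain ⟨h1, h2, h3, h4⟩ := h
  have hn' : (n : ℝ) ≤ 80 := by exact_mod_cast hn.le
  have hn0 : (0 : ℝ) ≤ n := Nat.cast_nonneg n
  have hn2 : (n : ℝ) ^ 2 ≤ 6400 := by nlinarith
  have a1 : 2 * n * (t.s + t.x + t.z) ≤ 2 * 80 * (t.s + t.x + t.z) := by gcongr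
  have a2 : (n : ℝ) ^ 2 * (be t + t.z) ≤ 6400 * (be t + t.z) := by
    have : 0 ≤ be t + t.z := by simp only [be]; positivity
    gcongr
  have a3 : (n : ℝ) * (be t + t.z) ≤ 80 * (be t + t.z) := by
    have : 0 ≤ be t + t.z := by simp only [be]; positivity
    gcongr
  constructor <;> simp only [dot, ch1, ch2, al, si, V.q, yL] <;> push_cast <;>
    simp only [be] at a2 a3 ⊢ <;> linarith

lemma low_exp : ∃ s : ℝ, 1.3 < s ∧ ∀ t, PQ t → dot yL.q t ^ (-s) ≤
    ∑ n ∈ Finset.range 80, (dot yL.q (ch1 t n) ^ (-s) + dot yL.q (ch2 t n) ^ (-s)) := by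
  set κ : ℝ := Real.log 1.001 / Real.log 1000000 with hκ
  have hl1 : 0 < Real.log 1.001 := Real.log_pos (by norm_num)
  have hl2 : 0 < Real.log 1000000 := Real.log_pos (by norm_num)
  have hκ0 : 0 < κ := div_pos hl1 hl2
  have hK : (1000000 : ℝ) ^ (-κ) = 1.001⁻¹ := by
    rw [Real.rpow_neg (by norm_num), Real.rpow_def_of_pos (by norm_num), hκ,
      mul_div_cancel₀ _ hl2.ne', Real.exp_log (by norm_num)]
  refine ⟨1.3 + κ, by linarith, fun t h => ?_⟩
  have hY := PyL.dot h
  have one : ∀ X, 0 < X → X ≤ 1000000 * dot yL.q t →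
      dot yL.q t ^ (-(1.3 + κ)) * (1.001⁻¹ * (X / dot yL.q t) ^ (-(1.3 : ℝ))) ≤ X ^ (-(1.3 + κ)) := by
    intro X hX hXK
    have e1 : X ^ (-(1.3 + κ)) = X ^ (-(1.3 : ℝ)) * X ^ (-κ) := by
      rw [← Real.rpow_add hX]; congr 1; ring
    have e2 : dot yL.q t ^ (-(1.3 + κ)) = dot yL.q t ^ (-(1.3 : ℝ)) * dot yL.q t ^ (-κ) := by
      rw [← Real.rpow_add hY]; congr 1; ring
    have e3 := Real.rpow_le_rpow_of_nonpos (z := -κ) hX hXK (by linarith)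
    rw [Real.mul_rpow (by norm_num) hY.le, hK] at e3
    rw [e1, e2, Real.div_rpow hX.le hY.le]
    have hp : 0 < dot yL.q t ^ (-(1.3 : ℝ)) := Real.rpow_pos_of_pos hY _
    calc _ = X ^ (-(1.3 : ℝ)) * (1.001⁻¹ * dot yL.q t ^ (-κ)) := by
          field_simp
      _ ≤ _ := by gcongr
  calc dot yL.q t ^ (-(1.3 + κ)) = dot yL.q t ^ (-(1.3 + κ)) * (1.001⁻¹ * 1.001) := by norm_num
    _ ≤ dot yL.q t ^ (-(1.3 + κ)) * (1.001⁻¹ * ∑ n ∈ Finset.range 80, rr 1.3 yL.q t n) := by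
        gcongr
        exact low_rr h
    _ = ∑ n ∈ Finset.range 80, dot yL.q t ^ (-(1.3 + κ)) * (1.001⁻¹ * rr 1.3 yL.q t n) := by
        rw [Finset.mul_sum, Finset.mul_sum]
    _ ≤ _ := by
        refine Finset.sum_le_sum fun n hn => ?_
        have hb := low_K h (Finset.mem_range.mp hn)
        have o1 := one _ (PyL.dot (h.ch1 n)) hb.1
        have o2 := one _ (PyL.dot (h.ch2 n)) hb.2
        simp only [rr, mul_add]
        linarith

lemma le_run_succ {φ : ℝ → ℝ} (hφ : Pos φ) (k m : ℕ) {q : Q} (h : K q) :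
    φ q.d + ∑ n ∈ Finset.range (m + 1), (S φ k (f 1 ((f 0)^[n] q)) + S φ k (f 2 ((f 0)^[n] q)))
      ≤ S φ (m + 1 + k) q := by
  rw [show m + 1 + k = (m + k) + 1 by ring, S_succ, Fin.sum_univ_three, Finset.sum_range_succ']
  have h1 := le_run hφ k m (h.f 0)
  have h2 := S_mono hφ (h.f 1) (show k ≤ m + k by omega)
  have h3 := S_mono hφ (h.f 2) (show k ≤ m + k by omega)
  simp only [Function.iterate_succ_apply, Function.iterate_zero, id] at h1 h2 h3 ⊢
  linarith

theorem numL : ∃ s : ℝ, 1.3 < s ∧ ¬ Bd s := by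
  obtain ⟨s, hs, hsum⟩ := low_exp
  refine ⟨s, hs, ?_⟩
  have main : ∀ (M : ℕ) (t : Q), PQ t → M * dot yL.q t ^ (-s) ≤ S (pw s) (80 * M) (cell t) := by
    intro M
    induction M with
    | zero => intro t h; simp [S_zero]
    | succ M ih =>
      intro t h
      have h1 := le_run_succ (pw_pos s) (80 * M) 79 h.K
      rw [show 79 + 1 + 80 * M = 80 * (M + 1) by ring, show 79 + 1 = 80 from rfl] at h1
      refine le_trans ?_ h1
      have h2 : dot yL.q t ^ (-s) ≤ pw s (cell t).d := by
        refine Real.rpow_le_rpow_of_nonpos h.K.d_pos ?_ (by linarith)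
        obtain ⟨h1, h2, h3, h4⟩ := h
        simp only [Q.d, cell, emb, f, dot, yL, V.q]
        push_cast
        linarith
      have h3 : (M : ℝ) * dot yL.q t ^ (-s) ≤ ∑ n ∈ Finset.range 80,
          (S (pw s) (80 * M) (f 1 ((f 0)^[n] (cell t))) + S (pw s) (80 * M) (f 2 ((f 0)^[n] (cell t)))) := by
        refine (mul_le_mul_of_nonneg_left (hsum t h) (Nat.cast_nonneg M)).trans ?_
        rw [Finset.mul_sum]
        refine Finset.sum_le_sum fun n _ => ?_
        rw [S_f1_run, S_f2_run]
        have := ih _ (h.ch1 n)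
        have := ih _ (h.ch2 n)
        linarith
      push_cast
      linarith
  rintro ⟨B, hB⟩
  have hP : PQ ⟨1, 1, 1, 1⟩ := by constructor <;> norm_num
  obtain ⟨μ, hμ, hμ'⟩ := exists_mu hP.K
  have hY : 0 < dot yL.q ⟨1, 1, 1, 1⟩ ^ (-s) := Real.rpow_pos_of_pos (PyL.dot hP) _
  obtain ⟨M, hM⟩ := exists_nat_gt (μ ^ (-s) * B / dot yL.q ⟨1, 1, 1, 1⟩ ^ (-s))
  rw [div_lt_iff₀ hY] at hM
  have h1 := main M _ hP
  have h2 := p_le_e (s := s) (by linarith) hμ hP.K hμ' (80 * M)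
  have h3 : μ ^ (-s) * S (pw s) (80 * M) e ≤ μ ^ (-s) * B :=
    mul_le_mul_of_nonneg_left (hB _) (by positivity)
  linarith

end Apo

namespace Apo

/-! ### combinatorics of the orbit -/

def act (i : Fin 4) (v : Fin 4 → ℤ) : Fin 4 → ℤ := (Sgen i).mulVec v

lemma act_eq (i : Fin 4) (v : Fin 4 → ℤ) (j : Fin 4) :
    act i v j = if j = i then 2 * (v 0 + v 1 + v 2 + v 3) - 3 * v i else v j := by
  fin_cases i <;> fin_cases j <;>
    simp [act, Sgen, Matrix.mulVec, dotProduct, Fin.sum_univ_four] <;> ring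

lemma act_act (i : Fin 4) (v : Fin 4 → ℤ) : act i (act i v) = v := by
  ext j
  fin_cases i <;> fin_cases j <;> simp [act_eq] <;> ring

def vec (l : List (Fin 4)) : Fin 4 → ℤ := l.foldr act rootQuadruple

lemma vec_cons (i : Fin 4) (l : List (Fin 4)) : vec (i :: l) = act i (vec l) := rfl

lemma vec_eq (l : List (Fin 4)) : ((l.map Sgen).prod).mulVec rootQuadruple = vec l := by
  induction l with
  | nil => simp [vec]
  | cons i l ih => rw [vec_cons, act, ← ih, List.map_cons, List.prod_cons, Matrix.mulVec_mulVec]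

abbrev Red (l : List (Fin 4)) : Prop := l.IsChain (· ≠ ·)

lemma exists_red (l : List (Fin 4)) : ∃ m, Red m ∧ vec m = vec l := by
  induction l with
  | nil => exact ⟨[], List.isChain_nil, rfl⟩
  | cons i l ih =>
    obtain ⟨m, hm, hv⟩ := ih
    rw [vec_cons, ← hv]
    cases m with
    | nil => exact ⟨[i], List.isChain_singleton _, rfl⟩
    | cons j m =>
      by_cases hij : i = j
      · subst hij
        exact ⟨m, hm.tail, by rw [vec_cons, act_act]⟩
      · exact ⟨i :: j :: m, List.isChain_cons_cons.2 ⟨hij, hm⟩, rfl⟩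

lemma orbit_eq : apollonianOrbit = {v | ∃ m, Red m ∧ vec m = v} := by
  ext v
  constructor
  · rintro ⟨γ, ⟨l, rfl⟩, rfl⟩
    rw [vec_eq]
    exact exists_red l
  · rintro ⟨m, _, rfl⟩
    exact ⟨_, ⟨m, rfl⟩, vec_eq m⟩

noncomputable def qv (v : Fin 4 → ℤ) (k : Fin 4) : Q :=
  emb ⟨v (k.succAbove 0), v (k.succAbove 1), v (k.succAbove 2),
    (v k - v (k.succAbove 0) - v (k.succAbove 1) - v (k.succAbove 2)) / 2⟩

lemma qv_d (v : Fin 4 → ℤ) (k : Fin 4) : (qv v k).d = v k := by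
  simp only [qv, emb, Q.d]; ring

lemma K.sw1 {q : Q} (h : K q) : K (sw1 q) := by
  obtain ⟨h1, h2, h3, h4, h5, h6, h7, h8, h9, h10⟩ := h
  constructor <;> simp only [Apo.sw1] <;> linarith

lemma K.sw2 {q : Q} (h : K q) : K (sw2 q) := by
  obtain ⟨h1, h2, h3, h4, h5, h6, h7, h8, h9, h10⟩ := h
  constructor <;> simp only [Apo.sw2] <;> linarith

def Sim (q r : Q) : Prop := (∀ φ n, S φ n q = S φ n r) ∧ (K r → K q)

lemma Sim.refl (q : Q) : Sim q q := ⟨fun _ _ => rfl, id⟩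
lemma Sim.s1 {q r : Q} (h : Sim q r) : Sim (sw1 q) r :=
  ⟨fun φ n => by rw [S_sw1, h.1], fun hr => (h.2 hr).sw1⟩
lemma Sim.s2 {q r : Q} (h : Sim q r) : Sim (sw2 q) r :=
  ⟨fun φ n => by rw [S_sw2, h.1], fun hr => (h.2 hr).sw2⟩

lemma Sim.d {q r : Q} (h : Sim q r) : q.d = r.d := by
  have := h.1 id 1
  simpa [S_succ, S_zero] using this

lemma sim_of {q r : Q} (h : q = r ∨ q = sw1 r ∨ q = sw2 r ∨ q = sw1 (sw2 r) ∨ q = sw2 (sw1 r)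
    ∨ q = sw1 (sw2 (sw1 r))) : Sim q r := by
  rcases h with h | h | h | h | h | h <;> rw [h]
  · exact Sim.refl r
  · exact (Sim.refl r).s1
  · exact (Sim.refl r).s2
  · exact (Sim.refl r).s2.s1
  · exact (Sim.refl r).s1.s2
  · exact (Sim.refl r).s1.s2.s1

lemma child (v : Fin 4 → ℤ) (k : Fin 4) (i : Fin 3) :
    Sim (qv (act (k.succAbove i) v) (k.succAbove i)) (f i (qv v k)) := by
  apply sim_of
  fin_cases k <;> fin_cases i <;>
  first
  | left; ext <;> simp [qv, emb, f, act_eq, Fin.succAbove] <;> ring; done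
  | right; left; ext <;> simp [qv, emb, f, act_eq, Fin.succAbove, sw1, sw2] <;> ring; done
  | right; right; left; ext <;> simp [qv, emb, f, act_eq, Fin.succAbove, sw1, sw2] <;> ring; done
  | right; right; right; left; ext <;> simp [qv, emb, f, act_eq, Fin.succAbove, sw1, sw2] <;> ring; done
  | right; right; right; right; left; ext <;> simp [qv, emb, f, act_eq, Fin.succAbove, sw1, sw2] <;> ring; done

end Apo

namespace Apo

lemma qv_val (v : Fin 4 → ℤ) (k : Fin 4) (a b c d : ℤ) (h : v (k.succAbove 0) = a ∧
    v (k.succAbove 1) = b ∧ v (k.succAbove 2) = c ∧ v k = d) :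
    qv v k = emb ⟨a, b, c, (d - a - b - c) / 2⟩ := by
  obtain ⟨h1, h2, h3, h4⟩ := h
  simp only [qv, h1, h2, h3, h4]

lemma red_K (k : Fin 4) (l : List (Fin 4)) (h : Red (k :: l)) :
    K (qv (vec (k :: l)) k) ∧ (27 + (l.length : ℤ)) < vec (k :: l) k := by
  induction l generalizing k with
  | nil =>
    constructor
    · fin_cases k
      · change K (qv (vec [0]) 0)
        rw [qv_val (vec [0]) 0 18 23 27 146 (by decide +kernel)]
        constructor <;> norm_num [emb]
      · change K (qv (vec [1]) 1)
        rw [qv_val (vec [1]) 1 (-10) 23 27 62 (by decide +kernel)]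
        constructor <;> norm_num [emb]
      · change K (qv (vec [2]) 2)
        rw [qv_val (vec [2]) 2 (-10) 18 27 47 (by decide +kernel)]
        constructor <;> norm_num [emb]
      · change K (qv (vec [3]) 3)
        rw [qv_val (vec [3]) 3 (-10) 18 23 35 (by decide +kernel)]
        constructor <;> norm_num [emb]
    · have h2 : ∀ k, (27 + (([] : List (Fin 4)).length : ℤ)) < vec [k] k := by decide +kernel
      exact h2 k
  | cons j l ih =>
    obtain ⟨hkj, hl⟩ := List.isChain_cons_cons.1 h
    obtain ⟨h1, h2⟩ := ih j hl
    obtain ⟨i, rfl⟩ := Fin.exists_succAbove_eq hkj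
    have hc := child (vec (j :: l)) j i
    rw [vec_cons]
    refine ⟨hc.2 (h1.f i), ?_⟩
    have hd := hc.d
    have hlt := d_f_lt h1 i
    rw [← hd, qv_d, qv_d] at hlt
    have : vec (j :: l) j < act (j.succAbove i) (vec (j :: l)) (j.succAbove i) := by
      exact_mod_cast hlt
    rw [List.length_cons]
    push_cast
    omega

lemma K_max {v : Fin 4 → ℤ} {k : Fin 4} (h : K (qv v k)) (j : Fin 4) (hj : j ≠ k) :
    v j < v k ∧ -v k < v j := by
  obtain ⟨i, rfl⟩ := Fin.exists_succAbove_eq hj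
  obtain ⟨h1, h2, h3, h4, -, -, -, -, -, -⟩ := h
  simp only [qv, emb] at h1 h2 h3 h4
  have h5 : (0 : ℝ) < v k - v (k.succAbove 0) - v (k.succAbove 1) - v (k.succAbove 2) := by linarith
  norm_cast at h1 h2 h3 h5
  fin_cases i <;> constructor <;> simp only [Fin.zero_eta, Fin.mk_one, Fin.reduceFinMk] <;> omega

lemma vec_inj {l m : List (Fin 4)} (hl : Red l) (hm : Red m) (h : vec l = vec m) : l = m := by
  have root : ∀ k l, Red (k :: l) → vec (k :: l) ≠ vec [] := by
    intro k l hr he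
    have h1 := (red_K k l hr).2
    rw [he] at h1
    have h2 : ∀ k, vec [] k ≤ 27 := by decide +kernel
    have h2 := h2 k
    omega
  induction l generalizing m with
  | nil =>
    cases m with
    | nil => rfl
    | cons k m => exact absurd h.symm (root k m hm)
  | cons k l ih =>
    cases m with
    | nil => exact absurd h (root k l hl)
    | cons j m =>
      have hkj : k = j := by
        by_contra hne
        have h1 := (K_max (red_K k l hl).1 j (Ne.symm hne)).1
        have h2 := (K_max (red_K j m hm).1 k hne).1
        rw [h] at h1
        omega
      subst hkj
      rw [vec_cons, vec_cons] at h
      have h' : vec l = vec m := by rw [← act_act k (vec l), h, act_act]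
      rw [show l = m from ih hl.tail hm.tail h']

open Classical in
/-- words extending `k :: l` by at most `n - 1` letters -/
noncomputable def W (T : ℝ) : ℕ → Fin 4 → List (Fin 4) → Finset (List (Fin 4))
  | 0, _, _ => ∅
  | n + 1, k, l => (if (vec (k :: l) k : ℝ) < T then {k :: l} else ∅) ∪
      Finset.univ.biUnion fun i : Fin 3 => W T n (k.succAbove i) (k :: l)

lemma W_suffix (T : ℝ) (n : ℕ) (k : Fin 4) (l m : List (Fin 4)) (h : m ∈ W T n k l) :
    k :: l <:+ m := by
  induction n generalizing k l with
  | zero => simp [W] at h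
  | succ n ih =>
    rw [W, Finset.mem_union, Finset.mem_biUnion] at h
    rcases h with h | ⟨i, -, h⟩
    · split_ifs at h
      · rw [Finset.mem_singleton] at h; rw [h]
      · simp at h
    · exact (List.suffix_cons _ _).trans (ih _ _ h)

lemma W_red (T : ℝ) (n : ℕ) (k : Fin 4) (l m : List (Fin 4)) (hr : Red (k :: l))
    (h : m ∈ W T n k l) : ∃ j p, m = j :: p ∧ Red m ∧ (vec m j : ℝ) < T := by
  induction n generalizing k l with
  | zero => simp [W] at h
  | succ n ih =>
    rw [W, Finset.mem_union, Finset.mem_biUnion] at h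
    rcases h with h | ⟨i, -, h⟩
    · split_ifs at h with hT
      · rw [Finset.mem_singleton] at h
        subst h
        exact ⟨k, l, rfl, hr, hT⟩
      · simp at h
    · exact ih _ _ (List.isChain_cons_cons.2 ⟨Fin.succAbove_ne k i, hr⟩) h

lemma W_mem (T : ℝ) (n : ℕ) (p : List (Fin 4)) (k j : Fin 4) (l : List (Fin 4))
    (hr : Red (p ++ k :: l)) (hh : (p ++ k :: l).head? = some j)
    (hT : (vec (p ++ k :: l) j : ℝ) < T) (hn : p.length < n) : p ++ k :: l ∈ W T n k l := by
  induction n generalizing p k l with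
  | zero => omega
  | succ n ih =>
    rw [W, Finset.mem_union, Finset.mem_biUnion]
    rcases List.eq_nil_or_concat p with rfl | ⟨p', a, rfl⟩
    · left
      simp only [List.nil_append, List.head?_cons, Option.some.injEq] at hh hT ⊢
      subst hh
      rw [if_pos hT]
      exact Finset.mem_singleton_self _
    · right
      simp only [List.concat_eq_append, List.append_assoc, List.singleton_append, List.length_append,
        List.length_cons, List.length_nil] at hr hh hT hn ⊢
      have hak : a ≠ k := (List.isChain_cons_cons.1 (List.isChain_append.1 hr).2.1).1
      obtain ⟨i, rfl⟩ := Fin.exists_succAbove_eq hak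
      exact ⟨i, Finset.mem_univ _, ih p' _ _ hr hh hT (by omega)⟩

lemma W_card (T : ℝ) (n : ℕ) (k : Fin 4) (l : List (Fin 4)) :
    ((W T n k l).card : ℝ) = S (fun u => if u < T then 1 else 0) n (qv (vec (k :: l)) k) := by
  induction n generalizing k l with
  | zero => simp [W, S_zero]
  | succ n ih =>
    rw [W, Finset.card_union_of_disjoint, Finset.card_biUnion, S_succ, qv_d]
    · push_cast
      congr 1
      · split_ifs <;> simp
      · refine Finset.sum_congr rfl fun i _ => ?_
        rw [ih, vec_cons]
        exact (child (vec (k :: l)) k i).1 _ _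
    · intro i _ j _ hij
      rw [Function.onFun, Finset.disjoint_left]
      intro m hi hj
      have h1 := W_suffix _ _ _ _ _ hi
      have h2 := W_suffix _ _ _ _ _ hj
      have h3 := (List.suffix_of_suffix_length_le h1 h2 (by simp)).eq_of_length (by simp)
      rw [List.cons.injEq] at h3
      exact hij (Fin.succAbove_right_injective h3.1)
    · rw [Finset.disjoint_left]
      intro m hi hj
      split_ifs at hi
      · rw [Finset.mem_singleton] at hi
        rw [Finset.mem_biUnion] at hj
        obtain ⟨i, -, hj⟩ := hj
        have := (W_suffix _ _ _ _ _ hj).length_le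
        rw [hi] at this
        simp at this
      · simp at hi

lemma set_eq (T : ℝ) (n : ℕ) (hn : T ≤ n) :
    {v : Fin 4 → ℤ | v ∈ apollonianOrbit ∧ v ≠ rootQuadruple ∧ ∀ j : Fin 4, (|v j| : ℝ) < T} =
    ((Finset.univ.biUnion fun k : Fin 4 => W T n k []).image vec : Finset (Fin 4 → ℤ)) := by
  ext v
  simp only [Set.mem_ofPred_eq, Finset.coe_image, Set.mem_image, Finset.mem_coe,
    Finset.mem_biUnion, Finset.mem_univ, true_and]
  constructor
  · rintro ⟨h1, h2, h3⟩
    rw [orbit_eq] at h1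
    obtain ⟨m, hm, rfl⟩ := h1
    refine ⟨m, ?_, rfl⟩
    cases hmm : m with
    | nil => rw [hmm] at h2; exact absurd rfl h2
    | cons j p =>
      have hlt : (vec m j : ℝ) < T := (le_abs_self _).trans_lt (h3 j)
      have hne : m ≠ [] := by rw [hmm]; simp
      obtain ⟨p', k, hp'⟩ := (List.eq_nil_or_concat m).resolve_left hne
      rw [List.concat_eq_append] at hp'
      refine ⟨k, ?_⟩
      have hlen := (red_K j p (hmm ▸ hm)).2
      rw [← hmm] at hlen ⊢
      have hh : m.head? = some j := by rw [hmm]; rfl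
      have hl : p'.length = p.length := by
        have e1 : m.length = p'.length + 1 := by rw [hp']; simp
        have e2 : m.length = p.length + 1 := by rw [hmm]; simp
        omega
      rw [hp'] at hm hh hlt hlen ⊢
      refine W_mem T n p' k j [] hm hh hlt ?_
      have h4 : (vec (p' ++ [k]) j : ℝ) < n := hlt.trans_le hn
      have h5 : vec (p' ++ [k]) j < (n : ℤ) := by exact_mod_cast h4
      omega
  · rintro ⟨m, ⟨k, hk⟩, rfl⟩
    obtain ⟨j, p, rfl, hr, hT⟩ := W_red T n k [] m (List.isChain_singleton _) hk
    refine ⟨?_, ?_, ?_⟩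
    · rw [orbit_eq]; exact ⟨_, hr, rfl⟩
    · intro he
      have := vec_inj hr List.isChain_nil (he.trans rfl : vec (j :: p) = vec [])
      simp at this
    · intro i
      have h0 := red_K j p hr
      have : |vec (j :: p) i| ≤ vec (j :: p) j := by
        by_cases hij : i = j
        · subst hij
          rw [abs_of_nonneg]
          omega
        · have := K_max h0.1 i hij
          rw [abs_le]
          omega
      have h2 : (|vec (j :: p) i| : ℝ) ≤ (vec (j :: p) j : ℝ) := by exact_mod_cast this
      exact h2.trans_lt hT

lemma card_eq (T : ℝ) (n : ℕ) (hn : T ≤ n) (hT : 0 < T) :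
    (Nat.card {v : Fin 4 → ℤ | v ∈ apollonianOrbit ∧ v ≠ rootQuadruple ∧
      ∀ j : Fin 4, (|v j| : ℝ) < T} : ℝ) = ∑ k : Fin 4, S χ n (sc T⁻¹ (qv (vec [k]) k)) := by
  rw [set_eq T n hn, Nat.card_coe_set_eq, Set.ncard_coe_finset, Finset.card_image_of_injOn,
    Finset.card_biUnion]
  · push_cast
    refine Finset.sum_congr rfl fun k _ => ?_
    rw [W_card, S_sc]
    congr 1
    ext u
    simp only [χ]
    congr 1
    rw [inv_mul_lt_iff₀ hT, mul_one]
  · intro i _ j _ hij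
    rw [Function.onFun, Finset.disjoint_left]
    intro m hi hj
    have h1 := W_suffix _ _ _ _ _ hi
    have h2 := W_suffix _ _ _ _ _ hj
    have h3 := (List.suffix_of_suffix_length_le h1 h2 (by simp)).eq_of_length (by simp)
    rw [List.cons.injEq] at h3
    exact hij h3.1
  · intro a ha b hb hab
    rw [Finset.mem_coe, Finset.mem_biUnion] at ha hb
    obtain ⟨i, -, hi⟩ := ha
    obtain ⟨j, -, hj⟩ := hb
    obtain ⟨_, _, _, r1, _⟩ := W_red T n i [] a (List.isChain_singleton _) hi
    obtain ⟨_, _, _, r2, _⟩ := W_red T n j [] b (List.isChain_singleton _) hj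
    exact vec_inj r1 r2 hab

lemma card_U {T : ℝ} (hT : 0 < T) :
    (Nat.card {v : Fin 4 → ℤ | v ∈ apollonianOrbit ∧ v ≠ rootQuadruple ∧
      ∀ j : Fin 4, (|v j| : ℝ) < T} : ℝ) = ∑ k : Fin 4, U χ (sc T⁻¹ (qv (vec [k]) k)) := by
  have h1 : Tendsto (fun n => ∑ k : Fin 4, S χ n (sc T⁻¹ (qv (vec [k]) k))) atTop
      (nhds (∑ k : Fin 4, U χ (sc T⁻¹ (qv (vec [k]) k)))) := by
    refine tendsto_finsetSum _ fun k _ => nice_χ.tendsto ?_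
    exact (red_K k [] (List.isChain_singleton _)).1.sc (inv_pos.2 hT)
  refine tendsto_nhds_unique (tendsto_const_nhds.congr' ?_) h1
  filter_upwards [eventually_ge_atTop ⌈T⌉₊] with n hn
  exact card_eq T n ((Nat.le_ceil T).trans (by exact_mod_cast hn)) hT

theorem main :
    ∃ δ : ℝ, 1.30 < δ ∧ δ < 1.31 ∧
      ∃ c : ℝ, 0 < c ∧
        Tendsto
          (fun T : ℝ =>
            (Nat.card {v : Fin 4 → ℤ | v ∈ apollonianOrbit ∧ v ≠ rootQuadruple ∧
                ∀ j : Fin 4, (|v j| : ℝ) < T} : ℝ) / T ^ δ)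
          atTop (nhds c) := by
  obtain ⟨δ, h1, h2, h3, h4⟩ := exists_delta numU numL
  obtain ⟨h, H⟩ := exists_har (δ := δ) (by linarith) (by linarith) h3 h4
  obtain ⟨L, hL, hF⟩ := F_asymp (by linarith) (by linarith) H
  have hK : ∀ k : Fin 4, K (qv (vec [k]) k) := fun k => (red_K k [] (List.isChain_singleton _)).1
  refine ⟨δ, by linarith, h2, ∑ k : Fin 4, L * h (qv (vec [k]) k), ?_, ?_⟩
  · exact Finset.sum_pos (fun k _ => mul_pos hL (H.pos (hK k))) ⟨0, by simp⟩
  · refine (tendsto_finsetSum _ fun k _ => hF _ (hK k)).congr' ?_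
    filter_upwards [eventually_gt_atTop 0] with T hT
    rw [card_U hT, Finset.sum_div]

end Apo

theorem stmt13 :
    ∃ δ : ℝ, 1.30 < δ ∧ δ < 1.31 ∧
      ∃ c : ℝ, 0 < c ∧
        Tendsto
          (fun T : ℝ =>
            (Nat.card {v : Fin 4 → ℤ | v ∈ apollonianOrbit ∧ v ≠ rootQuadruple ∧
                ∀ j : Fin 4, (|v j| : ℝ) < T} : ℝ) / T ^ δ)
          atTop (nhds c) := by
  exact Apo.main
end

section
/- (i) For every integer k, the k-th power of the matrix S₄S₃ in GL₄(ℤ) equals [[1,0,0,0],[0,1,0,0],[4k²−2k, 4k²−2k, 1−2k, 2k],[4k²+2k, 4k²+2k, −2k, 2k+1]]. (ii) Consequently, for every integer k, the fourth entry of (S₄S₃)^k · v₀ equals 32k² + 24k + 27; in particular 32k² + 24k + 27 ∈ B for every k ∈ ℤ. -/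
/-- `B` is the set of curvatures of circles in the gasket. -/
def curvatures : Set ℤ :=
  {n : ℤ | ∃ (γ : Matrix (Fin 4) (Fin 4) ℤ) (j : Fin 4),
    ApollonianMem γ ∧ (γ.mulVec rootQuadruple) j = n}

def Mk (k : ℤ) : Matrix (Fin 4) (Fin 4) ℤ :=
  !![1, 0, 0, 0;
     0, 1, 0, 0;
     4 * k ^ 2 - 2 * k, 4 * k ^ 2 - 2 * k, 1 - 2 * k, 2 * k;
     4 * k ^ 2 + 2 * k, 4 * k ^ 2 + 2 * k, -(2 * k), 2 * k + 1]

lemma Sgen32 : Sgen 3 * Sgen 2 = Mk 1 := by decide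
lemma Sgen23 : Sgen 2 * Sgen 3 = Mk (-1) := by decide
lemma Mk_zero : Mk 0 = 1 := by decide

lemma Mk_mul (a b : ℤ) : Mk a * Mk b = Mk (a + b) := by
  ext i j
  fin_cases i <;> fin_cases j <;>
    simp [Mk, Matrix.mul_apply, Fin.sum_univ_four] <;> ring

def uA : (Matrix (Fin 4) (Fin 4) ℤ)ˣ where
  val := Mk 1
  inv := Mk (-1)
  val_inv := by rw [Mk_mul, ← Mk_zero]; rfl
  inv_val := by rw [Mk_mul, ← Mk_zero]; rfl

lemma uA_zpow (k : ℤ) : ((uA ^ k : (Matrix (Fin 4) (Fin 4) ℤ)ˣ) : Matrix (Fin 4) (Fin 4) ℤ) = Mk k := by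
  induction k using Int.induction_on with
  | zero => simp [Mk_zero]
  | succ n ih => rw [zpow_add_one, Units.val_mul, ih]; exact Mk_mul _ 1
  | pred n ih => rw [zpow_sub_one, Units.val_mul, ih]; exact Mk_mul _ (-1)

lemma Mk_mem (k : ℤ) : ApollonianMem (Mk k) := by
  induction k using Int.induction_on with
  | zero => exact ⟨[], by simp [Mk_zero]⟩
  | succ n ih =>
    obtain ⟨l, hl⟩ := ih
    exact ⟨l ++ [3, 2], by rw [← Mk_mul, hl, ← Sgen32]; simp⟩
  | pred n ih =>
    obtain ⟨l, hl⟩ := ih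
    exact ⟨l ++ [2, 3], by rw [sub_eq_add_neg, ← Mk_mul, hl, ← Sgen23]; simp⟩

lemma Mk_root (k : ℤ) : ((Mk k).mulVec rootQuadruple) 3 = 32 * k ^ 2 + 24 * k + 27 := by
  simp [Mk, rootQuadruple, Matrix.mulVec, dotProduct, Fin.sum_univ_four]
  ring

theorem stmt15 :
    ∃ u : (Matrix (Fin 4) (Fin 4) ℤ)ˣ,
      (u : Matrix (Fin 4) (Fin 4) ℤ) = Sgen 3 * Sgen 2 ∧
      ∀ k : ℤ,
        ((u ^ k : (Matrix (Fin 4) (Fin 4) ℤ)ˣ) : Matrix (Fin 4) (Fin 4) ℤ) =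
          !![1, 0, 0, 0;
             0, 1, 0, 0;
             4 * k ^ 2 - 2 * k, 4 * k ^ 2 - 2 * k, 1 - 2 * k, 2 * k;
             4 * k ^ 2 + 2 * k, 4 * k ^ 2 + 2 * k, -(2 * k), 2 * k + 1] ∧
        (((u ^ k : (Matrix (Fin 4) (Fin 4) ℤ)ˣ) :
            Matrix (Fin 4) (Fin 4) ℤ).mulVec rootQuadruple) 3 =
          32 * k ^ 2 + 24 * k + 27 ∧
        32 * k ^ 2 + 24 * k + 27 ∈ curvatures := by
  refine ⟨uA, Sgen32.symm, fun k => ⟨uA_zpow k, ?_, Mk k, 3, Mk_mem k, Mk_root k⟩⟩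
  rw [uA_zpow]
  exact Mk_root k
end
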